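/- arXiv:1608.02139 — 12 statements merged into one kernel-verified Lean document; each statement's English description precedes it below -/
import Mathlib

section
/- Let σ > 0, let T > 0, and let s : ℝ → ℝ be twice continuously differentiable on [0,T) with s(0) = 0, s'(0) = σ, and s''(t) = 2 s(t)³ + t s(t) for all t ∈ [0,T). Then for every t with 0 < t < T one has s(t) > σ t. -/
open Set

/-!
While `s` is positive, so is `s'' = s (2 s² + t)`, hence `s` has no positive local maximum.
As `s` starts at `0` with positive slope, returning to a value `≤ 0` would force such a maximum;
hence `s > 0` on `(0, T)`. Then `s'' > 0` throughout, `s` is strictly convex, and it lies strictly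
above its tangent line at `0`, which is `σ t`.
-/

open Filter Topology

section SecondDerivative

variable {a b : ℝ} {f f' f'' : ℝ → ℝ}

lemma eventually_nhdsGT_lt_of_hasDerivWithinAt_pos {c : ℝ} (hf : HasDerivWithinAt f c (Ioi a) a)
    (hc : 0 < c) : ∀ᶠ x in 𝓝[>] a, f a < f x := by
  have hslope := (hasDerivWithinAt_iff_tendsto_slope' self_notMem_Ioi).1 hf
  filter_upwards [hslope.eventually_const_lt hc, self_mem_nhdsWithin] with x hx hax
  exact (slope_pos_iff_of_le (mem_Ioi.1 hax).le).1 hx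

lemma not_isLocalMax_of_second_deriv_pos {c : ℝ} (hf : ∀ᶠ x in 𝓝 a, HasDerivAt f (f' x) x)
    (hf' : HasDerivAt f' c a) (hc : 0 < c) : ¬ IsLocalMax f a := by
  intro hmax
  have hf'a : f' a = 0 := hmax.hasDerivAt_eq_zero hf.self_of_nhds
  have hright : ∀ᶠ x in 𝓝[>] a, HasDerivAt f (f' x) x ∧ f' a < f' x ∧ f x ≤ f a :=
    (hf.filter_mono nhdsWithin_le_nhds).and <|
      (eventually_nhdsGT_lt_of_hasDerivWithinAt_pos hf'.hasDerivWithinAt hc).and <|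
        hmax.filter_mono nhdsWithin_le_nhds
  obtain ⟨u, hau, hu⟩ := mem_nhdsGT_iff_exists_Ioc_subset.1 hright
  have hcont : ContinuousOn f (Icc a u) := by
    rw [← Ioc_insert_left hau.le]
    rintro x (rfl | hx)
    · exact hf.self_of_nhds.continuousAt.continuousWithinAt
    · exact (hu hx).1.continuousAt.continuousWithinAt
  obtain ⟨x, hx, hslope⟩ := exists_hasDerivAt_eq_slope f f' hau hcont
    fun x hx => (hu (Ioo_subset_Ioc_self hx)).1
  have hpos : 0 < slope f a u := by
    rw [slope_def_field, ← hslope, ← hf'a]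
    exact (hu (Ioo_subset_Ioc_self hx)).2.1
  exact ((slope_pos_iff_of_le hau.le).1 hpos).not_ge (hu (right_mem_Ioc.2 hau)).2.2

lemma tangent_lt_of_second_deriv_pos (hab : a < b) (hfc : ContinuousOn f (Icc a b))
    (hf'c : ContinuousOn f' (Icc a b)) (hf : ∀ x ∈ Ioo a b, HasDerivAt f (f' x) x)
    (hf' : ∀ x ∈ Ioo a b, HasDerivAt f' (f'' x) x) (hpos : ∀ x ∈ Ioo a b, 0 < f'' x) :
    f a + f' a * (b - a) < f b := by
  have hmono : StrictMonoOn f' (Icc a b) := by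
    refine strictMonoOn_of_hasDerivWithinAt_pos (f' := f'') (convex_Icc a b) hf'c ?_ ?_ <;>
      rw [interior_Icc]
    exacts [fun x hx => (hf' x hx).hasDerivWithinAt, hpos]
  obtain ⟨x, hx, hslope⟩ := exists_hasDerivAt_eq_slope f f' hab hfc hf
  have hlt : f' a < (f b - f a) / (b - a) :=
    hslope ▸ hmono (left_mem_Icc.2 hab.le) (Ioo_subset_Icc_self hx) hx.1
  linarith [(lt_div_iff₀ (sub_pos.2 hab)).1 hlt]

lemma pos_of_second_deriv_pos_of_pos (hab : a < b) (hfc : ContinuousOn f (Icc a b))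
    (hf : ∀ x ∈ Ioo a b, HasDerivAt f (f' x) x) (hf' : ∀ x ∈ Ioo a b, HasDerivAt f' (f'' x) x)
    (hpos : ∀ x ∈ Ioo a b, 0 < f x → 0 < f'' x) {c : ℝ}
    (hfa' : HasDerivWithinAt f c (Ioi a) a) (hc : 0 < c) (hfa : 0 ≤ f a) : 0 < f b := by
  by_contra! hfb
  obtain ⟨u, hfu, hu⟩ := ((eventually_nhdsGT_lt_of_hasDerivWithinAt_pos hfa' hc).and
    (Ioo_mem_nhdsGT hab)).exists
  obtain ⟨m, hm, hmax⟩ := isCompact_Icc.exists_isMaxOn (nonempty_Icc.2 hab.le) hfc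
  have hfm : f a < f m := hfu.trans_le (hmax (Ioo_subset_Icc_self hu))
  have hm' : m ∈ Ioo a b :=
    ⟨hm.1.lt_of_ne (by rintro rfl; exact hfm.false), hm.2.lt_of_ne (by rintro rfl; linarith)⟩
  exact not_isLocalMax_of_second_deriv_pos (eventually_of_mem (isOpen_Ioo.mem_nhds hm') hf)
    (hf' m hm') (hpos m hm' (hfa.trans_lt hfm)) (hmax.isLocalMax (Icc_mem_nhds hm'.1 hm'.2))

end SecondDerivative

theorem painleveII_gt_linear_general {a T : ℝ} {s s' s'' : ℝ → ℝ}
    (hs : ∀ t ∈ Ico a T, HasDerivWithinAt s (s' t) (Ico a T) t)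
    (hs' : ∀ t ∈ Ico a T, HasDerivWithinAt s' (s'' t) (Ico a T) t)
    (hsa : 0 ≤ s a) (hs'a : 0 < s' a) (hpos : ∀ t ∈ Ioo a T, 0 < s t → 0 < s'' t) :
    ∀ t ∈ Ioo a T, s a + s' a * (t - a) < s t := by
  have hIcc {t : ℝ} (ht : t ∈ Ioo a T) : Icc a t ⊆ Ico a T := Icc_subset_Ico_right ht.2
  have hIoo {t : ℝ} (ht : t ∈ Ioo a T) : Ioo a t ⊆ Ioo a T := Ioo_subset_Ioo_right ht.2.le
  have hsc : ContinuousOn s (Ico a T) := fun t ht => (hs t ht).continuousWithinAt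
  have hs'c : ContinuousOn s' (Ico a T) := fun t ht => (hs' t ht).continuousWithinAt
  have hsd : ∀ t ∈ Ioo a T, HasDerivAt s (s' t) t := fun t ht =>
    (hs t (Ioo_subset_Ico_self ht)).hasDerivAt (Ico_mem_nhds ht.1 ht.2)
  have hs'd : ∀ t ∈ Ioo a T, HasDerivAt s' (s'' t) t := fun t ht =>
    (hs' t (Ioo_subset_Ico_self ht)).hasDerivAt (Ico_mem_nhds ht.1 ht.2)
  have hspos : ∀ t ∈ Ioo a T, 0 < s t := fun t ht => by
    have haT : a < T := ht.1.trans ht.2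
    exact pos_of_second_deriv_pos_of_pos ht.1 (hsc.mono (hIcc ht))
      (fun x hx => hsd x (hIoo ht hx)) (fun x hx => hs'd x (hIoo ht hx))
      (fun x hx => hpos x (hIoo ht hx))
      ((hs a (left_mem_Ico.2 haT)).mono_of_mem_nhdsWithin (Ico_mem_nhdsGT haT)) hs'a hsa
  exact fun t ht => tangent_lt_of_second_deriv_pos ht.1 (hsc.mono (hIcc ht))
    (hs'c.mono (hIcc ht)) (fun x hx => hsd x (hIoo ht hx)) (fun x hx => hs'd x (hIoo ht hx))
    fun x hx => hpos x (hIoo ht hx) (hspos x (hIoo ht hx))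

/-- For a solution of the homogeneous Painlevé II equation `s'' = 2s³ + ts` on `[0,T)`
with `s(0) = 0` and `s'(0) = σ > 0`, one has `s(t) > σ t` for `0 < t < T`. -/
theorem painleveII_gt_linear (σ T : ℝ) (hσ : 0 < σ) (hT : 0 < T) (s s' s'' : ℝ → ℝ)
    (hderiv1 : ∀ t ∈ Ico (0:ℝ) T, HasDerivWithinAt s (s' t) (Ico 0 T) t)
    (hderiv2 : ∀ t ∈ Ico (0:ℝ) T, HasDerivWithinAt s' (s'' t) (Ico 0 T) t)
    (hcont : ContinuousOn s'' (Ico 0 T))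
    (hs0 : s 0 = 0) (hs'0 : s' 0 = σ)
    (heq : ∀ t ∈ Ico (0:ℝ) T, s'' t = 2 * s t ^ 3 + t * s t) :
    ∀ t, 0 < t → t < T → σ * t < s t := by
  have hpos : ∀ t ∈ Ioo 0 T, 0 < s t → 0 < s'' t := fun t ⟨ht, htT⟩ hst => by
    rw [heq t ⟨ht.le, htT⟩]; positivity
  simpa [hs0, hs'0] using painleveII_gt_linear_general hderiv1 hderiv2 hs0.ge (hs'0 ▸ hσ) hpos
end

section
/- Let σ > 0, let T > 0, and let s : ℝ → ℝ be twice continuously differentiable on [0,T) with s(0) = 0, s'(0) = σ, and s''(t) = 2 s(t)³ + t s(t) for all t ∈ [0,T). Then for every t with 0 < t < T one has s'(t)² > σ² + s(t)⁴. -/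
open Set MeasureTheory intervalIntegral Real

/-!
Write the equation as `s'' = (2 s² + t) s`. Its coefficient is positive for `t > 0`, so
`(s s')' = s'² + (2 s² + t) s² ≥ 0`; hence `s s' ≥ 0` and `s²` is nondecreasing. A zero of `s` at a
positive time would therefore force `s = 0` at all earlier times, contradicting `s'(0) ≠ 0`. So `s`
has no zero at positive times, `s s'` is strictly increasing and positive, and
`(s'² - s⁴)' = 2 t s s' > 0`.
-/

theorem lt_of_mem_interior_of_mem_lowerBounds {α : Type*} [TopologicalSpace α] [LinearOrder α]
    [OrderTopology α] [DenselyOrdered α] [NoMinOrder α] {D : Set α} {a t : α}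
    (ha : a ∈ lowerBounds D) (ht : t ∈ interior D) : a < t := by
  have hsub : D ⊆ Ici a := fun _ hx => ha hx
  have ht' : t ∈ interior (Ici a) := interior_mono hsub ht
  rwa [interior_Ici] at ht'

section

variable {D : Set ℝ} {a t : ℝ} {u u' p : ℝ → ℝ}

theorem monotoneOn_sq_of_mul_deriv_nonneg (hD : Convex ℝ D)
    (hu : ∀ t ∈ D, HasDerivWithinAt u (u' t) D t) (hnonneg : ∀ t ∈ interior D, 0 ≤ u t * u' t) :
    MonotoneOn (fun t => u t ^ 2) D := by
  have hderiv : ∀ t ∈ D, HasDerivWithinAt (fun t => u t ^ 2) (2 * (u t * u' t)) D t := fun t ht =>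
    ((hu t ht).fun_pow 2).congr_deriv (by ring)
  refine monotoneOn_of_hasDerivWithinAt_nonneg hD (HasDerivWithinAt.continuousOn hderiv)
    (fun t ht => (hderiv t (interior_subset ht)).mono interior_subset) fun t ht => ?_
  exact mul_nonneg zero_le_two (hnonneg t ht)

theorem ne_zero_of_monotoneOn_sq {c : ℝ} (hD : Convex ℝ D) (ha : a ∈ D)
    (hu : HasDerivWithinAt u c D a) (hmono : MonotoneOn (fun t => u t ^ 2) D)
    (hinit : u a ≠ 0 ∨ c ≠ 0) (ht : t ∈ D) (hat : a < t) : u t ≠ 0 := by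
  intro hut
  have hsub : Icc a t ⊆ D := hD.ordConnected.out ha ht
  have hzero : ∀ x ∈ Icc a t, u x = 0 := fun x hx => by
    have hle : u x ^ 2 ≤ u t ^ 2 := hmono (hsub hx) ht hx.2
    rw [hut, zero_pow two_ne_zero] at hle
    exact pow_eq_zero_iff two_ne_zero |>.mp (hle.antisymm (sq_nonneg _))
  have haI : a ∈ Icc a t := left_mem_Icc.mpr hat.le
  have hc : c = 0 :=
    (uniqueDiffOn_Icc hat a haI).eq_deriv _ (hu.mono hsub)
      ((hasDerivWithinAt_const a _ 0).congr_of_mem hzero haI)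
  exact hinit.elim (· (hzero a haI)) (· hc)

theorem hasDerivWithinAt_mul_deriv_of_deriv2_eq_mul {c : ℝ} (hu : HasDerivWithinAt u (u' t) D t)
    (hu' : HasDerivWithinAt u' (c * u t) D t) :
    HasDerivWithinAt (fun t => u t * u' t) (u' t ^ 2 + c * u t ^ 2) D t :=
  (hu.fun_mul hu').congr_deriv (by ring)

theorem monotoneOn_mul_deriv_of_deriv2_eq_mul (hD : Convex ℝ D)
    (hu : ∀ t ∈ D, HasDerivWithinAt u (u' t) D t)
    (hu' : ∀ t ∈ D, HasDerivWithinAt u' (p t * u t) D t)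
    (hp : ∀ t ∈ interior D, 0 ≤ p t) : MonotoneOn (fun t => u t * u' t) D := by
  have hderiv := fun t ht => hasDerivWithinAt_mul_deriv_of_deriv2_eq_mul (hu t ht) (hu' t ht)
  refine monotoneOn_of_hasDerivWithinAt_nonneg hD (HasDerivWithinAt.continuousOn hderiv)
    (fun t ht => (hderiv t (interior_subset ht)).mono interior_subset) fun t ht => ?_
  have := hp t ht
  positivity

theorem strictMonoOn_mul_deriv_of_deriv2_eq_mul (hD : Convex ℝ D)
    (hu : ∀ t ∈ D, HasDerivWithinAt u (u' t) D t)
    (hu' : ∀ t ∈ D, HasDerivWithinAt u' (p t * u t) D t)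
    (hp : ∀ t ∈ interior D, 0 < p t) (hne : ∀ t ∈ interior D, u t ≠ 0) :
    StrictMonoOn (fun t => u t * u' t) D := by
  have hderiv := fun t ht => hasDerivWithinAt_mul_deriv_of_deriv2_eq_mul (hu t ht) (hu' t ht)
  refine strictMonoOn_of_hasDerivWithinAt_pos hD (HasDerivWithinAt.continuousOn hderiv)
    (fun t ht => (hderiv t (interior_subset ht)).mono interior_subset) fun t ht => ?_
  have := hp t ht
  have := hne t ht
  positivity

theorem mul_deriv_pos_of_deriv2_eq_mul (hD : Convex ℝ D) (ha : IsLeast D a)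
    (hu : ∀ t ∈ D, HasDerivWithinAt u (u' t) D t)
    (hu' : ∀ t ∈ D, HasDerivWithinAt u' (p t * u t) D t)
    (hp : ∀ t ∈ interior D, 0 < p t) (hinit : 0 ≤ u a * u' a) (hne : u a ≠ 0 ∨ u' a ≠ 0)
    (ht : t ∈ D) (hat : a < t) : 0 < u t * u' t := by
  have hmono : MonotoneOn (fun x => u x * u' x) D :=
    monotoneOn_mul_deriv_of_deriv2_eq_mul hD hu hu' fun x hx => (hp x hx).le
  have hnonneg : ∀ x ∈ interior D, 0 ≤ u x * u' x := fun x hx =>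
    hinit.trans (hmono ha.1 (interior_subset hx) (ha.2 (interior_subset hx)))
  have hsq : MonotoneOn (fun x => u x ^ 2) D := monotoneOn_sq_of_mul_deriv_nonneg hD hu hnonneg
  have hne_zero : ∀ x ∈ interior D, u x ≠ 0 := fun x hx =>
    ne_zero_of_monotoneOn_sq hD ha.1 (hu a ha.1) hsq hne (interior_subset hx)
      (lt_of_mem_interior_of_mem_lowerBounds ha.2 hx)
  exact hinit.trans_lt (strictMonoOn_mul_deriv_of_deriv2_eq_mul hD hu hu' hp hne_zero ha.1 ht hat)

theorem strictMonoOn_sq_deriv_sub_potential {g q W : ℝ → ℝ} (hD : Convex ℝ D) (ha : IsLeast D a)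
    (hW : ∀ x, HasDerivAt W (2 * (g x * x)) x) (hg : ∀ x, 0 ≤ g x)
    (hq : ∀ t ∈ interior D, 0 < q t)
    (hu : ∀ t ∈ D, HasDerivWithinAt u (u' t) D t)
    (hu' : ∀ t ∈ D, HasDerivWithinAt u' ((g (u t) + q t) * u t) D t)
    (hinit : 0 ≤ u a * u' a) (hne : u a ≠ 0 ∨ u' a ≠ 0) :
    StrictMonoOn (fun t => u' t ^ 2 - W (u t)) D := by
  have hderiv : ∀ t ∈ D,
      HasDerivWithinAt (fun t => u' t ^ 2 - W (u t)) (2 * q t * (u t * u' t)) D t := fun t ht =>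
    (((hu' t ht).fun_pow 2).fun_sub ((hW (u t)).comp_hasDerivWithinAt t (hu t ht))).congr_deriv
      (by ring)
  refine strictMonoOn_of_hasDerivWithinAt_pos hD (HasDerivWithinAt.continuousOn hderiv)
    (fun t ht => (hderiv t (interior_subset ht)).mono interior_subset) fun t ht => ?_
  have hpos : 0 < u t * u' t :=
    mul_deriv_pos_of_deriv2_eq_mul (p := fun t => g (u t) + q t) hD ha hu hu'
      (fun x hx => add_pos_of_nonneg_of_pos (hg _) (hq x hx)) hinit hne (interior_subset ht)
      (lt_of_mem_interior_of_mem_lowerBounds ha.2 ht)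
  exact mul_pos (mul_pos two_pos (hq t ht)) hpos

end

theorem painleveII_first_integral_lower_general {D : Set ℝ} {a : ℝ} {s s' : ℝ → ℝ}
    (hD : Convex ℝ D) (ha : IsLeast D a) (ha_nonneg : 0 ≤ a)
    (hs : ∀ t ∈ D, HasDerivWithinAt s (s' t) D t)
    (hs' : ∀ t ∈ D, HasDerivWithinAt s' (2 * s t ^ 3 + t * s t) D t)
    (hinit : 0 ≤ s a * s' a) (hne : s a ≠ 0 ∨ s' a ≠ 0) :
    StrictMonoOn (fun t => s' t ^ 2 - s t ^ 4) D := by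
  refine strictMonoOn_sq_deriv_sub_potential (g := fun x => 2 * x ^ 2) (q := fun t => t)
    (W := fun x => x ^ 4) hD ha (fun x => ?_) (fun x => by positivity)
    (fun t ht => ha_nonneg.trans_lt (lt_of_mem_interior_of_mem_lowerBounds ha.2 ht)) hs
    (fun t ht => (hs' t ht).congr_deriv (by ring)) hinit hne
  exact (hasDerivAt_pow 4 x).congr_deriv (by norm_num; ring)

theorem painleveII_first_integral_lower (σ T : ℝ) (hσ : 0 < σ) (hT : 0 < T) (s s' s'' : ℝ → ℝ)
    (hderiv1 : ∀ t ∈ Ico (0:ℝ) T, HasDerivWithinAt s (s' t) (Ico 0 T) t)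
    (hderiv2 : ∀ t ∈ Ico (0:ℝ) T, HasDerivWithinAt s' (s'' t) (Ico 0 T) t)
    (hcont : ContinuousOn s'' (Ico 0 T))
    (hs0 : s 0 = 0) (hs'0 : s' 0 = σ)
    (heq : ∀ t ∈ Ico (0:ℝ) T, s'' t = 2 * s t ^ 3 + t * s t) :
    ∀ t, 0 < t → t < T → σ ^ 2 + s t ^ 4 < s' t ^ 2 := by
  intro t ht htT
  have hlt : s' 0 ^ 2 - s 0 ^ 4 < s' t ^ 2 - s t ^ 4 :=
    painleveII_first_integral_lower_general (convex_Ico 0 T) (isLeast_Ico hT) le_rfl hderiv1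
      (fun t ht => (hderiv2 t ht).congr_deriv (heq t ht)) (by simp [hs0])
      (.inr (hs'0 ▸ hσ.ne')) (left_mem_Ico.mpr hT) ⟨ht.le, htT⟩ ht
  rw [hs0, hs'0] at hlt
  linarith
end

section
/- Let σ > 0, let T > 0, and let s : ℝ → ℝ be twice continuously differentiable on [0,T) with s(0) = 0, s'(0) = σ, and s''(t) = 2 s(t)³ + t s(t) for all t ∈ [0,T). Then for all τ, t with 0 < τ < t < T one has t − τ < 1/s(τ) − 1/s(t); in particular s(t) > 1/(1/s(τ) + τ − t). -/
open Set MeasureTheory intervalIntegral Real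

/-!
Where `s ≥ 0` and `t ≥ 0` the equation gives `s'' ≥ 2 s³ ≥ 0`, so a solution that starts upwards
from `s(0) = 0` keeps increasing. Along it the energy `s'² - s⁴` has derivative
`2 s' (s'' - 2 s³) ≥ 0`, so it stays at least its initial value `σ² > 0`. Hence `s' > s²`, which
says that `1 / s + t` has negative derivative.
-/

theorem forall_mem_Ico_lt_of_forall_lt_imp_lt {α β : Type*} [ConditionallyCompleteLinearOrder α]
    [TopologicalSpace α] [OrderTopology α] [LinearOrder β] [TopologicalSpace β]
    [ClosedIicTopology β] {f : α → β} {a b : α} {y : β} (hf : ContinuousOn f (Ico a b))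
    (hstep : ∀ c ∈ Ico a b, (∀ x ∈ Ico a c, y < f x) → y < f c) :
    ∀ c ∈ Ico a b, y < f c := by
  intro d hd
  by_contra! hfd
  have hclosed : IsClosed (Icc a d ∩ f ⁻¹' Iic y) :=
    (hf.mono (Icc_subset_Ico_right hd.2)).preimage_isClosed_of_isClosed isClosed_Icc isClosed_Iic
  have hcompact : IsCompact (Icc a d ∩ f ⁻¹' Iic y) :=
    isCompact_Icc.of_isClosed_subset hclosed inter_subset_left
  obtain ⟨c, ⟨hc, hfc⟩, hleast⟩ := hcompact.exists_isLeast ⟨d, right_mem_Icc.2 hd.1, hfd⟩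
  refine (hstep c ⟨hc.1, hc.2.trans_lt hd.2⟩ fun x hx => ?_).not_ge hfc
  by_contra! hfx
  exact (hleast ⟨⟨hx.1, hx.2.le.trans hc.2⟩, hfx⟩).not_gt hx.2

section Convex

variable {s s' s'' : ℝ → ℝ} {D : Set ℝ}

theorem monotoneOn_of_forall_hasDerivWithinAt_nonneg (hD : Convex ℝ D)
    (hs : ∀ t ∈ D, HasDerivWithinAt s (s' t) D t) (hs'_nonneg : ∀ t ∈ interior D, 0 ≤ s' t) :
    MonotoneOn s D :=
  monotoneOn_of_hasDerivWithinAt_nonneg hD (HasDerivWithinAt.continuousOn hs)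
    (fun t ht => (hs t (interior_subset ht)).mono interior_subset) hs'_nonneg

theorem monotoneOn_sq_deriv_sub_two_mul_potential {V V' : ℝ → ℝ} (hD : Convex ℝ D)
    (hV : ∀ y, HasDerivAt V (V' y) y)
    (hs : ∀ t ∈ D, HasDerivWithinAt s (s' t) D t)
    (hs' : ∀ t ∈ D, HasDerivWithinAt s' (s'' t) D t)
    (hs'_nonneg : ∀ t ∈ interior D, 0 ≤ s' t) (hs'' : ∀ t ∈ interior D, V' (s t) ≤ s'' t) :
    MonotoneOn (fun t => s' t ^ 2 - 2 * V (s t)) D := by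
  have henergy : ∀ t ∈ D, HasDerivWithinAt (fun t => s' t ^ 2 - 2 * V (s t))
      (2 * s' t * (s'' t - V' (s t))) D t := fun t ht => by
    refine (((hs' t ht).fun_pow 2).sub
      (((hV (s t)).comp_hasDerivWithinAt t (hs t ht)).const_mul 2)).congr_deriv ?_
    push_cast
    ring
  exact monotoneOn_of_forall_hasDerivWithinAt_nonneg hD henergy fun t ht =>
    mul_nonneg (mul_nonneg zero_le_two (hs'_nonneg t ht)) (sub_nonneg.2 (hs'' t ht))

theorem strictAntiOn_one_div_add_id_of_sq_lt_deriv (hD : Convex ℝ D)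
    (hs : ∀ t ∈ D, HasDerivWithinAt s (s' t) D t) (hs_ne : ∀ t ∈ D, s t ≠ 0)
    (hs_lt : ∀ t ∈ interior D, s t ^ 2 < s' t) :
    StrictAntiOn (fun t => 1 / s t + t) D := by
  have hderiv : ∀ t ∈ D, HasDerivWithinAt (fun t => 1 / s t + t) (-s' t / s t ^ 2 + 1) D t := by
    intro t ht
    simp only [one_div]
    exact ((hs t ht).fun_inv (hs_ne t ht)).fun_add (hasDerivWithinAt_id t D)
  refine strictAntiOn_of_hasDerivWithinAt_neg hD (HasDerivWithinAt.continuousOn hderiv)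
    (fun t ht => (hderiv t (interior_subset ht)).mono interior_subset) fun t ht => ?_
  have hone_lt : 1 < s' t / s t ^ 2 :=
    (one_lt_div (sq_pos_of_ne_zero (hs_ne t (interior_subset ht)))).2 (hs_lt t ht)
  rw [neg_div]
  linarith

end Convex

section Ico

variable {s s' s'' : ℝ → ℝ} {a b : ℝ}

theorem deriv_pos_of_second_deriv_nonneg_of_nonneg
    (hs : ∀ t ∈ Ico a b, HasDerivWithinAt s (s' t) (Ico a b) t)
    (hs' : ∀ t ∈ Ico a b, HasDerivWithinAt s' (s'' t) (Ico a b) t)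
    (hsa : 0 ≤ s a) (hs'a : 0 < s' a) (hs'' : ∀ t ∈ Ico a b, 0 ≤ s t → 0 ≤ s'' t) :
    ∀ t ∈ Ico a b, 0 < s' t := by
  refine forall_mem_Ico_lt_of_forall_lt_imp_lt (HasDerivWithinAt.continuousOn hs')
    fun c hc hpos => ?_
  have hsub : Icc a c ⊆ Ico a b := Icc_subset_Ico_right hc.2
  have ha : a ∈ Icc a c := left_mem_Icc.2 hc.1
  have hs_mono : MonotoneOn s (Icc a c) :=
    monotoneOn_of_forall_hasDerivWithinAt_nonneg (convex_Icc a c)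
      (fun t ht => (hs t (hsub ht)).mono hsub) fun t ht => by
        rw [interior_Icc] at ht
        exact (hpos t (Ioo_subset_Ico_self ht)).le
  have hs'_mono : MonotoneOn s' (Icc a c) :=
    monotoneOn_of_forall_hasDerivWithinAt_nonneg (convex_Icc a c)
      (fun t ht => (hs' t (hsub ht)).mono hsub) fun t ht => by
        have htI := interior_subset ht
        exact hs'' t (hsub htI) (hsa.trans (hs_mono ha htI htI.1))
  exact hs'a.trans_le (hs'_mono ha (right_mem_Icc.2 hc.1) hc.1)

theorem pos_of_nonneg_of_deriv_pos
    (hs : ∀ t ∈ Ico a b, HasDerivWithinAt s (s' t) (Ico a b) t)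
    (hsa : 0 ≤ s a) (hs'_pos : ∀ t ∈ Ioo a b, 0 < s' t) :
    ∀ t ∈ Ioo a b, 0 < s t := by
  have hs_mono : StrictMonoOn s (Ico a b) :=
    strictMonoOn_of_hasDerivWithinAt_pos (convex_Ico a b) (HasDerivWithinAt.continuousOn hs)
      (fun t ht => (hs t (interior_subset ht)).mono interior_subset)
      fun t ht => hs'_pos t (interior_Ico.subset ht)
  exact fun t ht => hsa.trans_lt <|
    hs_mono (left_mem_Ico.2 (ht.1.trans ht.2)) (Ioo_subset_Ico_self ht) ht.1

theorem sq_lt_deriv_of_two_mul_cube_le_second_deriv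
    (hs : ∀ t ∈ Ico a b, HasDerivWithinAt s (s' t) (Ico a b) t)
    (hs' : ∀ t ∈ Ico a b, HasDerivWithinAt s' (s'' t) (Ico a b) t)
    (hsa : 0 ≤ s a) (hs'a : s a ^ 2 < s' a)
    (hs'' : ∀ t ∈ Ico a b, 0 ≤ s t → 2 * s t ^ 3 ≤ s'' t) :
    ∀ t ∈ Ico a b, s t ^ 2 < s' t := by
  intro t ht
  have hs'_pos : ∀ t ∈ Ico a b, 0 < s' t :=
    deriv_pos_of_second_deriv_nonneg_of_nonneg hs hs' hsa ((sq_nonneg _).trans_lt hs'a)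
      fun t ht hst => le_trans (by positivity) (hs'' t ht hst)
  have hs_pos : ∀ t ∈ Ioo a b, 0 < s t :=
    pos_of_nonneg_of_deriv_pos hs hsa fun t ht => hs'_pos t (Ioo_subset_Ico_self ht)
  have hV (y : ℝ) : HasDerivAt (fun y => y ^ 4 / 2) (2 * y ^ 3) y :=
    ((hasDerivAt_pow 4 y).div_const 2).congr_deriv (by push_cast; ring)
  have henergy : s' a ^ 2 - 2 * (s a ^ 4 / 2) ≤ s' t ^ 2 - 2 * (s t ^ 4 / 2) :=
    monotoneOn_sq_deriv_sub_two_mul_potential (convex_Ico a b) hV hs hs'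
      (fun t ht => (hs'_pos t (interior_subset ht)).le)
      (fun t ht => hs'' t (interior_subset ht) (hs_pos t (interior_Ico.subset ht)).le)
      (left_mem_Ico.2 (ht.1.trans_lt ht.2)) ht ht.1
  have hinit : (s a ^ 2) ^ 2 < s' a ^ 2 := by gcongr
  refine lt_of_pow_lt_pow_left₀ 2 (hs'_pos t ht).le ?_
  linarith

theorem painleveII_reciprocal_bound_general
    (hs : ∀ t ∈ Ico a b, HasDerivWithinAt s (s' t) (Ico a b) t)
    (hs' : ∀ t ∈ Ico a b, HasDerivWithinAt s' (s'' t) (Ico a b) t)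
    (hsa : 0 ≤ s a) (hs'a : s a ^ 2 < s' a)
    (hs'' : ∀ t ∈ Ico a b, 0 ≤ s t → 2 * s t ^ 3 ≤ s'' t) :
    ∀ τ t, a < τ → τ < t → t < b →
      t - τ < 1 / s τ - 1 / s t ∧ 1 / (1 / s τ + τ - t) < s t := by
  intro τ t haτ hτt htb
  have hs_lt : ∀ t ∈ Ioo a b, s t ^ 2 < s' t := fun t ht =>
    sq_lt_deriv_of_two_mul_cube_le_second_deriv hs hs' hsa hs'a hs'' t (Ioo_subset_Ico_self ht)
  have hs_pos : ∀ t ∈ Ioo a b, 0 < s t :=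
    pos_of_nonneg_of_deriv_pos hs hsa fun t ht => (sq_nonneg _).trans_lt (hs_lt t ht)
  have hanti : StrictAntiOn (fun t => 1 / s t + t) (Ioo a b) :=
    strictAntiOn_one_div_add_id_of_sq_lt_deriv (convex_Ioo a b)
      (fun t ht => (hs t (Ioo_subset_Ico_self ht)).mono Ioo_subset_Ico_self)
      (fun t ht => (hs_pos t ht).ne') fun t ht => hs_lt t (interior_subset ht)
  have ht : t ∈ Ioo a b := ⟨haτ.trans hτt, htb⟩
  have hlt : 1 / s t + t < 1 / s τ + τ := hanti ⟨haτ, hτt.trans htb⟩ ht hτt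
  have hrecip : 0 < 1 / s t := one_div_pos.2 (hs_pos t ht)
  refine ⟨by linarith, (one_div_lt ?_ (hs_pos t ht)).2 ?_⟩ <;> linarith

end Ico

theorem painleveII_reciprocal_bound (σ T : ℝ) (hσ : 0 < σ) (hT : 0 < T) (s s' s'' : ℝ → ℝ)
    (hderiv1 : ∀ t ∈ Ico (0:ℝ) T, HasDerivWithinAt s (s' t) (Ico 0 T) t)
    (hderiv2 : ∀ t ∈ Ico (0:ℝ) T, HasDerivWithinAt s' (s'' t) (Ico 0 T) t)
    (hcont : ContinuousOn s'' (Ico 0 T))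
    (hs0 : s 0 = 0) (hs'0 : s' 0 = σ)
    (heq : ∀ t ∈ Ico (0:ℝ) T, s'' t = 2 * s t ^ 3 + t * s t) :
    ∀ τ t, 0 < τ → τ < t → t < T →
      t - τ < 1 / s τ - 1 / s t ∧ 1 / (1 / s τ + τ - t) < s t :=
  painleveII_reciprocal_bound_general hderiv1 hderiv2 hs0.ge (by simpa [hs0, hs'0] using hσ)
    fun t ht hst => heq t ht ▸ le_add_of_nonneg_right (mul_nonneg ht.1 hst)
end

section
/- Let σ > 0, let T > 0, and let s : ℝ → ℝ be twice continuously differentiable on [0,T) with s(0) = 0, s'(0) = σ, and s''(t) = 2 s(t)³ + t s(t) for all t ∈ [0,T). Then for every τ with 0 < τ < T one has T ≤ τ + 1/s(τ). (Equivalently, τ + s(τ)⁻¹ does not belong to the maximal domain of s, so s experiences finite-time blow-up in positive time.) -/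
open Set MeasureTheory intervalIntegral Real

/-!
As long as `s ≥ 0`, the equation gives `s'' ≥ 2 s³`. Starting from `s ≥ 0` and `s' > 0`, the
function is convex while it is nonnegative, so it keeps increasing and never leaves that regime.
Since `s' ≥ 0`, the inequality can be multiplied by `s'` and integrated: the energy
`s' ^ 2 - s ^ 4` is nondecreasing, hence stays nonnegative, and `s' ≥ s ^ 2`. This Riccati
inequality says that `-1 / s - t` is nondecreasing, while `-1 / s` must remain negative, which
leaves `s` a lifespan of at most `1 / s τ` after any time `τ`.
-/

theorem monotoneOn_of_forall_hasDerivWithinAt_nonneg_s3 {D : Set ℝ} (hD : Convex ℝ D) {f f' : ℝ → ℝ}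
    (hf : ∀ t ∈ D, HasDerivWithinAt f (f' t) D t) (hf' : ∀ t ∈ interior D, 0 ≤ f' t) :
    MonotoneOn f D :=
  monotoneOn_of_hasDerivWithinAt_nonneg hD (fun t ht ↦ (hf t ht).continuousWithinAt)
    (fun t ht ↦ (hf t (interior_subset ht)).mono interior_subset) hf'

theorem monotoneOn_deriv_sq_sub_comp {D : Set ℝ} (hD : Convex ℝ D) {u u' u'' V V' : ℝ → ℝ}
    (hu : ∀ t ∈ D, HasDerivWithinAt u (u' t) D t)
    (hu' : ∀ t ∈ D, HasDerivWithinAt u' (u'' t) D t)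
    (hV : ∀ t ∈ D, HasDerivAt V (V' (u t)) (u t))
    (hu'_nonneg : ∀ t ∈ interior D, 0 ≤ u' t) (hV_le : ∀ t ∈ interior D, V' (u t) ≤ 2 * u'' t) :
    MonotoneOn (fun t ↦ u' t ^ 2 - V (u t)) D := by
  refine monotoneOn_of_forall_hasDerivWithinAt_nonneg_s3 hD
    (fun t ht ↦ ((hu' t ht).fun_pow 2).fun_sub ((hV t ht).comp_hasDerivWithinAt t (hu t ht)))
    fun t ht ↦ ?_
  calc (0 : ℝ) ≤ (2 * u'' t - V' (u t)) * u' t :=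
        mul_nonneg (sub_nonneg.2 (hV_le t ht)) (hu'_nonneg t ht)
    _ = _ := by push_cast; ring

section Ico

variable {a b : ℝ} {u u' u'' : ℝ → ℝ}

theorem le_add_one_div_of_sq_le_deriv (hu : ∀ t ∈ Ico a b, HasDerivWithinAt u (u' t) (Ico a b) t)
    (ha : 0 < u a) (hsq : ∀ t ∈ Ico a b, u t ^ 2 ≤ u' t) : b ≤ a + 1 / u a := by
  by_contra! hlt
  have hlife : 0 < 1 / u a := one_div_pos.2 ha
  have ha_mem : a ∈ Ico a b := ⟨le_rfl, by linarith⟩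
  have hmono : MonotoneOn u (Ico a b) :=
    monotoneOn_of_forall_hasDerivWithinAt_nonneg_s3 (convex_Ico a b) hu
      fun t ht ↦ (sq_nonneg (u t)).trans (hsq t (interior_subset ht))
  have hpos : ∀ t ∈ Ico a b, 0 < u t := fun t ht ↦ ha.trans_le (hmono ha_mem ht ht.1)
  have hinv_mono : MonotoneOn (fun t ↦ -(u t)⁻¹ - t) (Ico a b) := by
    refine monotoneOn_of_forall_hasDerivWithinAt_nonneg_s3 (convex_Ico a b)
      (fun t ht ↦ ((hu t ht).fun_inv (hpos t ht).ne').fun_neg.fun_sub (hasDerivWithinAt_id t _))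
      fun t ht ↦ ?_
    have ht : t ∈ Ico a b := interior_subset ht
    rw [neg_div, neg_neg, sub_nonneg, one_le_div (pow_pos (hpos t ht) 2)]
    exact hsq t ht
  have hend_mem : a + 1 / u a ∈ Ico a b := ⟨by linarith, hlt⟩
  have hend_le : -(u a)⁻¹ - a ≤ -(u (a + 1 / u a))⁻¹ - (a + 1 / u a) :=
    hinv_mono ha_mem hend_mem hend_mem.1
  have hend_pos : 0 < (u (a + 1 / u a))⁻¹ := inv_pos.2 (hpos _ hend_mem)
  have hone_div : 1 / u a = (u a)⁻¹ := one_div _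
  linarith

theorem deriv_pos_of_deriv2_nonneg_of_nonneg
    (hu : ∀ t ∈ Ico a b, HasDerivWithinAt u (u' t) (Ico a b) t)
    (hu' : ∀ t ∈ Ico a b, HasDerivWithinAt u' (u'' t) (Ico a b) t)
    (hu'' : ∀ t ∈ Ico a b, 0 ≤ u t → 0 ≤ u'' t) (ha : 0 ≤ u a) (ha' : 0 < u' a) :
    ∀ t ∈ Ico a b, 0 < u' t := by
  by_contra! ⟨x, hx, hx_nonpos⟩
  have hcont : ContinuousOn u' (Icc a x) := fun t ht ↦
    (hu' t ⟨ht.1, ht.2.trans_lt hx.2⟩).continuousWithinAt.mono (Icc_subset_Ico_right hx.2)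
  have hcompact : IsCompact (Icc a x ∩ u' ⁻¹' Iic 0) :=
    isCompact_Icc.of_isClosed_subset
      (hcont.preimage_isClosed_of_isClosed isClosed_Icc isClosed_Iic) inter_subset_left
  obtain ⟨y, ⟨hy, hy_nonpos⟩, hy_least⟩ := hcompact.exists_isLeast ⟨x, ⟨hx.1, le_rfl⟩, hx_nonpos⟩
  have hsub : Icc a y ⊆ Ico a b := Icc_subset_Ico_right (hy.2.trans_lt hx.2)
  have hu'_nonneg : ∀ t ∈ interior (Icc a y), 0 ≤ u' t := by
    intro t ht
    rw [interior_Icc] at ht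
    by_contra! hneg
    exact ht.2.not_ge (hy_least ⟨⟨ht.1.le, ht.2.le.trans hy.2⟩, hneg.le⟩)
  have hu_mono : MonotoneOn u (Icc a y) :=
    monotoneOn_of_forall_hasDerivWithinAt_nonneg_s3 (convex_Icc a y)
      (fun t ht ↦ (hu t (hsub ht)).mono hsub) hu'_nonneg
  have hu'_mono : MonotoneOn u' (Icc a y) := by
    refine monotoneOn_of_forall_hasDerivWithinAt_nonneg_s3 (convex_Icc a y)
      (fun t ht ↦ (hu' t (hsub ht)).mono hsub) fun t ht ↦ ?_
    have ht : t ∈ Icc a y := interior_subset ht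
    exact hu'' t (hsub ht) (ha.trans (hu_mono (left_mem_Icc.2 hy.1) ht ht.1))
  exact (ha'.trans_le (hu'_mono (left_mem_Icc.2 hy.1) (right_mem_Icc.2 hy.1) hy.1)).not_ge hy_nonpos

theorem sq_le_deriv_of_two_mul_cube_le_deriv2
    (hu : ∀ t ∈ Ico a b, HasDerivWithinAt u (u' t) (Ico a b) t)
    (hu' : ∀ t ∈ Ico a b, HasDerivWithinAt u' (u'' t) (Ico a b) t)
    (hu'_nonneg : ∀ t ∈ Ico a b, 0 ≤ u' t) (hcube : ∀ t ∈ Ico a b, 2 * u t ^ 3 ≤ u'' t)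
    (hsq : u a ^ 2 ≤ u' a) : ∀ t ∈ Ico a b, u t ^ 2 ≤ u' t := by
  intro t ht
  have hmono : MonotoneOn (fun t ↦ u' t ^ 2 - u t ^ 4) (Ico a b) :=
    monotoneOn_deriv_sq_sub_comp (V := fun x ↦ x ^ 4) (V' := fun x ↦ 4 * x ^ 3)
      (convex_Ico a b) hu hu' (fun t _ ↦ by simpa using hasDerivAt_pow 4 (u t))
      (fun t ht ↦ hu'_nonneg t (interior_subset ht))
      (fun t ht ↦ by linarith [hcube t (interior_subset ht)])
  have henergy : u' a ^ 2 - u a ^ 4 ≤ u' t ^ 2 - u t ^ 4 :=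
    hmono (left_mem_Ico.2 (ht.1.trans_lt ht.2)) ht ht.1
  have hinit : (u a ^ 2) ^ 2 ≤ u' a ^ 2 := pow_le_pow_left₀ (sq_nonneg _) hsq 2
  exact le_of_sq_le_sq (by linarith) (hu'_nonneg t ht)

theorem painleveII_blowup_bound_general
    (hu : ∀ t ∈ Ico a b, HasDerivWithinAt u (u' t) (Ico a b) t)
    (hu' : ∀ t ∈ Ico a b, HasDerivWithinAt u' (u'' t) (Ico a b) t)
    (hcube : ∀ t ∈ Ico a b, 0 ≤ u t → 2 * u t ^ 3 ≤ u'' t)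
    (ha : 0 ≤ u a) (ha' : 0 < u' a) (hsq : u a ^ 2 ≤ u' a) {τ : ℝ} (haτ : a < τ) (hτb : τ < b) :
    b ≤ τ + 1 / u τ := by
  have hu'_pos : ∀ t ∈ Ico a b, 0 < u' t :=
    deriv_pos_of_deriv2_nonneg_of_nonneg hu hu'
      (fun t ht hut ↦ le_trans (by positivity) (hcube t ht hut)) ha ha'
  have hu_mono : StrictMonoOn u (Ico a b) :=
    strictMonoOn_of_hasDerivWithinAt_pos (convex_Ico a b)
      (fun t ht ↦ (hu t ht).continuousWithinAt)
      (fun t ht ↦ (hu t (interior_subset ht)).mono interior_subset)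
      (fun t ht ↦ hu'_pos t (interior_subset ht))
  have ha_mem : a ∈ Ico a b := left_mem_Ico.2 (haτ.trans hτb)
  have hu_nonneg : ∀ t ∈ Ico a b, 0 ≤ u t := fun t ht ↦
    ha.trans (hu_mono.monotoneOn ha_mem ht ht.1)
  have hu_sq : ∀ t ∈ Ico a b, u t ^ 2 ≤ u' t :=
    sq_le_deriv_of_two_mul_cube_le_deriv2 hu hu' (fun t ht ↦ (hu'_pos t ht).le)
      (fun t ht ↦ hcube t ht (hu_nonneg t ht)) hsq
  have hτ_pos : 0 < u τ := ha.trans_lt (hu_mono ha_mem ⟨haτ.le, hτb⟩ haτ)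
  have hsub : Ico τ b ⊆ Ico a b := Ico_subset_Ico_left haτ.le
  exact le_add_one_div_of_sq_le_deriv (fun t ht ↦ (hu t (hsub ht)).mono hsub) hτ_pos
    fun t ht ↦ hu_sq t (hsub ht)

end Ico

theorem painleveII_blowup_bound (σ T : ℝ) (hσ : 0 < σ) (hT : 0 < T) (s s' s'' : ℝ → ℝ)
    (hderiv1 : ∀ t ∈ Ico (0:ℝ) T, HasDerivWithinAt s (s' t) (Ico 0 T) t)
    (hderiv2 : ∀ t ∈ Ico (0:ℝ) T, HasDerivWithinAt s' (s'' t) (Ico 0 T) t)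
    (hcont : ContinuousOn s'' (Ico 0 T))
    (hs0 : s 0 = 0) (hs'0 : s' 0 = σ)
    (heq : ∀ t ∈ Ico (0:ℝ) T, s'' t = 2 * s t ^ 3 + t * s t) :
    ∀ τ, 0 < τ → τ < T → T ≤ τ + 1 / s τ := fun _ ↦
  painleveII_blowup_bound_general hderiv1 hderiv2
    (fun t ht hst ↦ by linarith [heq t ht, mul_nonneg ht.1 hst])
    hs0.ge (hs'0 ▸ hσ) (by simpa [hs0, hs'0] using hσ.le)
end

section
/- Let σ > 0, let T > 0, and let s : ℝ → ℝ be twice continuously differentiable on [0,T) with s(0) = 0, s'(0) = σ, and s''(t) = 2 s(t)³ + t s(t) for all t ∈ [0,T). Then T < 2/√σ. (The blow-up time t∞ of the maximal solution satisfies t∞ < 2/√σ.) -/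
open Set MeasureTheory intervalIntegral Real

/-!
The equation gives `2 s³ ≤ s''` wherever `0 ≤ s`. This prevents `s'` from ever dropping below
`σ = s' 0`, so `σ t ≤ s t`; and the energy `s'² - s⁴` then increases from `σ² > 0`, so `s² < s'`.
Up to time `1 / √σ` the linear bound lifts `s` to at least `√σ`; from there on the Riccati
inequality `s² < s'` allows a remaining lifespan of less than `1 / s (1 / √σ) ≤ 1 / √σ`.
-/

section Monotonicity

variable {D : Set ℝ} {f f' f'' : ℝ → ℝ}

lemma monotoneOn_of_hasDerivWithinAt_of_interior_nonneg (hD : Convex ℝ D)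
    (hf : ∀ t ∈ D, HasDerivWithinAt f (f' t) D t) (hf'_nonneg : ∀ t ∈ interior D, 0 ≤ f' t) :
    MonotoneOn f D :=
  monotoneOn_of_hasDerivWithinAt_nonneg hD (fun t ht ↦ (hf t ht).continuousWithinAt)
    (fun t ht ↦ (hf t (interior_subset ht)).mono interior_subset) hf'_nonneg

lemma add_mul_sub_le_of_le_hasDerivWithinAt {C x y : ℝ} (hD : Convex ℝ D)
    (hf : ∀ t ∈ D, HasDerivWithinAt f (f' t) D t) (hC : ∀ t ∈ interior D, C ≤ f' t)
    (hx : x ∈ D) (hy : y ∈ D) (hxy : x ≤ y) : f x + C * (y - x) ≤ f y := by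
  have hmono : MonotoneOn (fun t ↦ f t - C * t) D :=
    monotoneOn_of_hasDerivWithinAt_of_interior_nonneg hD
      (fun t ht ↦ (hf t ht).sub ((hasDerivWithinAt_id t D).const_mul C))
      (fun t ht ↦ by linarith [hC t ht])
  linarith [hmono hx hy hxy]

lemma monotoneOn_deriv_sq_sub_two_mul_potential {V v : ℝ → ℝ} (hD : Convex ℝ D)
    (hf : ∀ t ∈ D, HasDerivWithinAt f (f' t) D t) (hf' : ∀ t ∈ D, HasDerivWithinAt f' (f'' t) D t)
    (hV : ∀ x, HasDerivAt V (v x) x) (hf'_nonneg : ∀ t ∈ interior D, 0 ≤ f' t)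
    (hv : ∀ t ∈ interior D, v (f t) ≤ f'' t) :
    MonotoneOn (fun t ↦ f' t ^ 2 - 2 * V (f t)) D := by
  refine monotoneOn_of_hasDerivWithinAt_of_interior_nonneg hD
    (fun t ht ↦ ((hf' t ht).pow 2).sub
      (((hV (f t)).comp_hasDerivWithinAt t (hf t ht)).const_mul 2)) fun t ht ↦ ?_
  have hpower : 0 ≤ f' t * (f'' t - v (f t)) :=
    mul_nonneg (hf'_nonneg t ht) (sub_nonneg.2 (hv t ht))
  calc 0 ≤ 2 * (f' t * (f'' t - v (f t))) := by positivity
    _ = _ := by norm_num; ring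

lemma strictAntiOn_add_inv_of_sq_lt_deriv (hD : Convex ℝ D)
    (hf : ∀ t ∈ D, HasDerivWithinAt f (f' t) D t) (hf_ne : ∀ t ∈ D, f t ≠ 0)
    (hriccati : ∀ t ∈ D, f t ^ 2 < f' t) :
    StrictAntiOn (fun t ↦ t + (f t)⁻¹) D := by
  have hderiv : ∀ t ∈ D,
      HasDerivWithinAt (fun t ↦ t + (f t)⁻¹) (1 + -f' t / f t ^ 2) D t := fun t ht ↦
    (hasDerivWithinAt_id t _).add ((hf t ht).inv (hf_ne t ht))
  refine strictAntiOn_of_hasDerivWithinAt_neg hD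
    (fun t ht ↦ (hderiv t ht).continuousWithinAt)
    (fun t ht ↦ (hderiv t (interior_subset ht)).mono interior_subset) fun t ht ↦ ?_
  have hone : 1 < f' t / f t ^ 2 :=
    (one_lt_div (sq_pos_of_ne_zero (hf_ne t (interior_subset ht)))).2
      (hriccati t (interior_subset ht))
  rw [neg_div]
  linarith

end Monotonicity

section HalfOpenInterval

variable {a b : ℝ} {f f' f'' : ℝ → ℝ}

lemma pos_on_Ico_of_forall_pos_before {g : ℝ → ℝ} (hg : ContinuousOn g (Ico a b))
    (hstep : ∀ c ∈ Ico a b, (∀ x ∈ Ico a c, 0 < g x) → 0 < g c) : ∀ t ∈ Ico a b, 0 < g t := by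
  intro t ht
  by_contra! ht_nonpos
  have hsub : Icc a t ⊆ Ico a b := Icc_subset_Ico_right ht.2
  have hcompact : IsCompact (Icc a t ∩ g ⁻¹' Iic 0) :=
    isCompact_Icc.of_isClosed_subset
      ((hg.mono hsub).preimage_isClosed_of_isClosed isClosed_Icc isClosed_Iic) inter_subset_left
  obtain ⟨c, ⟨hc_mem, hc_nonpos⟩, hc_least⟩ :=
    hcompact.exists_isLeast ⟨t, right_mem_Icc.2 ht.1, ht_nonpos⟩
  refine (hstep c (hsub hc_mem) fun x hx ↦ ?_).not_ge hc_nonpos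
  by_contra! hx_nonpos
  exact hx.2.not_ge (hc_least ⟨⟨hx.1, hx.2.le.trans hc_mem.2⟩, hx_nonpos⟩)

lemma deriv_left_le_of_deriv_nonneg_before
    (hf : ∀ t ∈ Ico a b, HasDerivWithinAt f (f' t) (Ico a b) t)
    (hf' : ∀ t ∈ Ico a b, HasDerivWithinAt f' (f'' t) (Ico a b) t)
    (hfa : 0 ≤ f a) (hf'' : ∀ t ∈ Ico a b, 0 ≤ f t → 0 ≤ f'' t)
    {c : ℝ} (hc : c ∈ Ico a b) (hf'_nonneg : ∀ x ∈ Ioo a c, 0 ≤ f' x) : f' a ≤ f' c := by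
  have hsub : Icc a c ⊆ Ico a b := Icc_subset_Ico_right hc.2
  have ha : a ∈ Icc a c := left_mem_Icc.2 hc.1
  have hf_mono : MonotoneOn f (Icc a c) :=
    monotoneOn_of_hasDerivWithinAt_of_interior_nonneg (convex_Icc a c)
      (fun x hx ↦ (hf x (hsub hx)).mono hsub) (by rwa [interior_Icc])
  have hf'_mono : MonotoneOn f' (Icc a c) :=
    monotoneOn_of_hasDerivWithinAt_of_interior_nonneg (convex_Icc a c)
      (fun x hx ↦ (hf' x (hsub hx)).mono hsub) fun x hx ↦
        have hx : x ∈ Icc a c := interior_subset hx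
        hf'' x (hsub hx) (hfa.trans (hf_mono ha hx hx.1))
  exact hf'_mono ha (right_mem_Icc.2 hc.1) hc.1

lemma deriv_left_le_of_nonneg_imp_deriv2_nonneg
    (hf : ∀ t ∈ Ico a b, HasDerivWithinAt f (f' t) (Ico a b) t)
    (hf' : ∀ t ∈ Ico a b, HasDerivWithinAt f' (f'' t) (Ico a b) t)
    (hfa : 0 ≤ f a) (hf'a : 0 < f' a) (hf'' : ∀ t ∈ Ico a b, 0 ≤ f t → 0 ≤ f'' t) :
    ∀ t ∈ Ico a b, f' a ≤ f' t := by
  have hf'_pos : ∀ t ∈ Ico a b, 0 < f' t :=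
    pos_on_Ico_of_forall_pos_before (fun t ht ↦ (hf' t ht).continuousWithinAt) fun c hc hpos ↦
      hf'a.trans_le <| deriv_left_le_of_deriv_nonneg_before hf hf' hfa hf'' hc fun x hx ↦
        (hpos x (Ioo_subset_Ico_self hx)).le
  exact fun t ht ↦ deriv_left_le_of_deriv_nonneg_before hf hf' hfa hf'' ht fun x hx ↦
    (hf'_pos x ⟨hx.1.le, hx.2.trans ht.2⟩).le

lemma tangent_left_le_of_nonneg_imp_deriv2_nonneg
    (hf : ∀ t ∈ Ico a b, HasDerivWithinAt f (f' t) (Ico a b) t)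
    (hf' : ∀ t ∈ Ico a b, HasDerivWithinAt f' (f'' t) (Ico a b) t)
    (hfa : 0 ≤ f a) (hf'a : 0 < f' a) (hf'' : ∀ t ∈ Ico a b, 0 ≤ f t → 0 ≤ f'' t) :
    ∀ t ∈ Ico a b, f a + f' a * (t - a) ≤ f t := fun _ ht ↦
  add_mul_sub_le_of_le_hasDerivWithinAt (convex_Ico a b) hf
    (fun x hx ↦ deriv_left_le_of_nonneg_imp_deriv2_nonneg hf hf' hfa hf'a hf'' x
      (interior_subset hx))
    (left_mem_Ico.2 (ht.1.trans_lt ht.2)) ht ht.1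

lemma sq_lt_deriv_of_two_mul_pow_three_le_deriv2
    (hf : ∀ t ∈ Ico a b, HasDerivWithinAt f (f' t) (Ico a b) t)
    (hf' : ∀ t ∈ Ico a b, HasDerivWithinAt f' (f'' t) (Ico a b) t)
    (hfa : 0 ≤ f a) (hsq : f a ^ 2 < f' a)
    (hcubic : ∀ t ∈ Ico a b, 0 ≤ f t → 2 * f t ^ 3 ≤ f'' t) :
    ∀ t ∈ Ico a b, f t ^ 2 < f' t := by
  intro t ht
  have ha : a ∈ Ico a b := left_mem_Ico.2 (ht.1.trans_lt ht.2)
  have hf'a : 0 < f' a := (sq_nonneg (f a)).trans_lt hsq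
  have hf'' : ∀ x ∈ Ico a b, 0 ≤ f x → 0 ≤ f'' x := fun x hx hfx ↦
    (by positivity : 0 ≤ 2 * f x ^ 3).trans (hcubic x hx hfx)
  have hf'_pos : ∀ x ∈ Ico a b, 0 < f' x := fun x hx ↦
    hf'a.trans_le (deriv_left_le_of_nonneg_imp_deriv2_nonneg hf hf' hfa hf'a hf'' x hx)
  have hf_nonneg : ∀ x ∈ Ico a b, 0 ≤ f x := fun x hx ↦
    (add_nonneg hfa (mul_nonneg hf'a.le (sub_nonneg.2 hx.1))).trans
      (tangent_left_le_of_nonneg_imp_deriv2_nonneg hf hf' hfa hf'a hf'' x hx)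
  have hpotential : ∀ x : ℝ, HasDerivAt (fun x ↦ x ^ 4 / 2) (2 * x ^ 3) x := fun x ↦
    ((hasDerivAt_pow 4 x).div_const 2).congr_deriv (by norm_num; ring)
  have henergy : f' a ^ 2 - 2 * (f a ^ 4 / 2) ≤ f' t ^ 2 - 2 * (f t ^ 4 / 2) :=
    monotoneOn_deriv_sq_sub_two_mul_potential (convex_Ico a b) hf hf' hpotential
      (fun x hx ↦ (hf'_pos x (interior_subset hx)).le)
      (fun x hx ↦ hcubic x (interior_subset hx) (hf_nonneg x (interior_subset hx))) ha ht ht.1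
  have hsq_sq : (f a ^ 2) ^ 2 < f' a ^ 2 := pow_lt_pow_left₀ hsq (sq_nonneg (f a)) two_ne_zero
  exact lt_of_pow_lt_pow_left₀ 2 (hf'_pos t ht).le (by linarith)

lemma lt_add_inv_of_sq_lt_deriv (hf : ∀ t ∈ Ico a b, HasDerivWithinAt f (f' t) (Ico a b) t)
    (hfa : 0 < f a) (hriccati : ∀ t ∈ Ico a b, f t ^ 2 < f' t) : b < a + (f a)⁻¹ := by
  rcases le_or_gt b a with hba | hab
  · exact hba.trans_lt (lt_add_of_pos_right a (inv_pos.2 hfa))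
  have hf_mono : MonotoneOn f (Ico a b) :=
    monotoneOn_of_hasDerivWithinAt_of_interior_nonneg (convex_Ico a b) hf fun t ht ↦
      (sq_nonneg (f t)).trans (hriccati t (interior_subset ht)).le
  have hf_pos : ∀ t ∈ Ico a b, 0 < f t := fun t ht ↦
    hfa.trans_le (hf_mono (left_mem_Ico.2 hab) ht ht.1)
  have hanti : StrictAntiOn (fun t ↦ t + (f t)⁻¹) (Ico a b) :=
    strictAntiOn_add_inv_of_sq_lt_deriv (convex_Ico a b) hf (fun t ht ↦ (hf_pos t ht).ne') hriccati
  obtain ⟨c, hac, hcb⟩ := exists_between hab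
  have hb_le : b ≤ c + (f c)⁻¹ := by
    refine le_of_forall_lt_imp_le_of_dense fun t htb ↦ ?_
    rcases le_or_gt t c with htc | hct
    · exact htc.trans (le_add_of_nonneg_right (inv_pos.2 (hf_pos c ⟨hac.le, hcb⟩)).le)
    · have ht : t ∈ Ico a b := ⟨(hac.trans hct).le, htb⟩
      calc t ≤ t + (f t)⁻¹ := le_add_of_nonneg_right (inv_pos.2 (hf_pos t ht)).le
        _ ≤ c + (f c)⁻¹ := (hanti ⟨hac.le, hcb⟩ ht hct).le
  exact hb_le.trans_lt (hanti (left_mem_Ico.2 hab) ⟨hac.le, hcb⟩ hac)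

end HalfOpenInterval

theorem painleveII_blowup_time_upper_general {T : ℝ} {s s' s'' : ℝ → ℝ}
    (hs : ∀ t ∈ Ico 0 T, HasDerivWithinAt s (s' t) (Ico 0 T) t)
    (hs' : ∀ t ∈ Ico 0 T, HasDerivWithinAt s' (s'' t) (Ico 0 T) t)
    (hs0 : s 0 = 0) (hs'0 : 0 < s' 0)
    (hcubic : ∀ t ∈ Ico 0 T, 0 ≤ s t → 2 * s t ^ 3 ≤ s'' t) : T < 2 / √(s' 0) := by
  set r := √(s' 0)
  have hr_pos : 0 < r := sqrt_pos.2 hs'0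
  have hr_sq : s' 0 = r ^ 2 := (sq_sqrt hs'0.le).symm
  have hr_add : r⁻¹ + r⁻¹ = 2 / r := by ring
  rcases le_or_gt T r⁻¹ with hT | hT
  · linarith [inv_pos.2 hr_pos]
  have hmem : r⁻¹ ∈ Ico 0 T := ⟨(inv_pos.2 hr_pos).le, hT⟩
  have hs'' : ∀ t ∈ Ico 0 T, 0 ≤ s t → 0 ≤ s'' t := fun t ht hst ↦
    (by positivity : 0 ≤ 2 * s t ^ 3).trans (hcubic t ht hst)
  have hr_le : r ≤ s r⁻¹ := by
    have htangent := tangent_left_le_of_nonneg_imp_deriv2_nonneg hs hs' hs0.ge hs'0 hs'' _ hmem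
    rwa [hs0, hr_sq, zero_add, sub_zero, sq, mul_inv_cancel_right₀ hr_pos.ne'] at htangent
  have hriccati : ∀ t ∈ Ico 0 T, s t ^ 2 < s' t :=
    sq_lt_deriv_of_two_mul_pow_three_le_deriv2 hs hs' hs0.ge (by simpa [hs0] using hs'0) hcubic
  have hsub : Ico r⁻¹ T ⊆ Ico 0 T := Ico_subset_Ico_left hmem.1
  calc T < r⁻¹ + (s r⁻¹)⁻¹ :=
        lt_add_inv_of_sq_lt_deriv (fun t ht ↦ (hs t (hsub ht)).mono hsub)
          (hr_pos.trans_le hr_le) fun t ht ↦ hriccati t (hsub ht)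
    _ ≤ r⁻¹ + r⁻¹ := by gcongr
    _ = 2 / r := hr_add

theorem painleveII_blowup_time_upper (σ T : ℝ) (hσ : 0 < σ) (hT : 0 < T) (s s' s'' : ℝ → ℝ)
    (hderiv1 : ∀ t ∈ Ico (0:ℝ) T, HasDerivWithinAt s (s' t) (Ico 0 T) t)
    (hderiv2 : ∀ t ∈ Ico (0:ℝ) T, HasDerivWithinAt s' (s'' t) (Ico 0 T) t)
    (hcont : ContinuousOn s'' (Ico 0 T))
    (hs0 : s 0 = 0) (hs'0 : s' 0 = σ)
    (heq : ∀ t ∈ Ico (0:ℝ) T, s'' t = 2 * s t ^ 3 + t * s t) :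
    T < 2 / Real.sqrt σ := by
  subst hs'0
  exact painleveII_blowup_time_upper_general hderiv1 hderiv2 hs0 hσ fun t ht hst ↦
    heq t ht ▸ le_add_of_nonneg_right (mul_nonneg ht.1 hst)
end

section
/- Let σ > 0, let T > 0, and let s : ℝ → ℝ be twice continuously differentiable on [0,T) with s(0) = 0, s'(0) = σ, and s''(t) = 2 s(t)³ + t s(t) for all t ∈ [0,T). Then for every t with 0 < t < T one has s'(t)² < σ² + s(t)⁴ + 2 s(t)³/(3σ). -/
open Set MeasureTheory intervalIntegral Real

/-! Along a solution, `s⁴ + 2s³/(3σ) - s'²` has derivative `2 s s' (s/σ - t)`, so the claim is that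
this quantity stays above its initial value `-σ²`. The derivative is positive because `s` solves the
linear equation `s'' = q s` with coefficient `q = 2s² + t > 0`: its solutions with `s(0) ≥ 0` and
`s'(0) > 0` increase and lie above their tangent line at `0`, here `σ t`. -/

theorem strictMonoOn_Ico_of_hasDerivWithinAt_pos {a b : ℝ} {f f' : ℝ → ℝ}
    (hf : ∀ t ∈ Ico a b, HasDerivWithinAt f (f' t) (Ico a b) t)
    (hf' : ∀ t ∈ Ioo a b, 0 < f' t) : StrictMonoOn f (Ico a b) :=
  strictMonoOn_of_hasDerivWithinAt_pos (convex_Ico a b) (fun t ht ↦ (hf t ht).continuousWithinAt)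
    (fun t ht ↦ (hf t (interior_subset ht)).mono interior_subset)
    (fun t ht ↦ hf' t (interior_Ico.subset ht))

theorem monotoneOn_Ico_of_hasDerivWithinAt_nonneg {a b : ℝ} {f f' : ℝ → ℝ}
    (hf : ∀ t ∈ Ico a b, HasDerivWithinAt f (f' t) (Ico a b) t)
    (hf' : ∀ t ∈ Ioo a b, 0 ≤ f' t) : MonotoneOn f (Ico a b) :=
  monotoneOn_of_hasDerivWithinAt_nonneg (convex_Ico a b) (fun t ht ↦ (hf t ht).continuousWithinAt)
    (fun t ht ↦ (hf t (interior_subset ht)).mono interior_subset)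
    (fun t ht ↦ hf' t (interior_Ico.subset ht))

/-- The linear equation `s'' = q s` on `[a, b)`, with `s'` the derivative of `s`. Derivatives are
taken within `[a, b)`, hence from the right at `a`. The coefficient `q` may depend on `s`, so that
nonlinear equations `s'' = p(t, s) s` are covered. -/
structure IsLinearSolutionOn (q s s' : ℝ → ℝ) (a b : ℝ) : Prop where
  hasDerivWithinAt : ∀ t ∈ Ico a b, HasDerivWithinAt s (s' t) (Ico a b) t
  hasDerivWithinAt_deriv : ∀ t ∈ Ico a b, HasDerivWithinAt s' (q t * s t) (Ico a b) t

namespace IsLinearSolutionOn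

variable {q s s' : ℝ → ℝ} {a b t : ℝ}

theorem monotoneOn_mul_deriv (h : IsLinearSolutionOn q s s' a b) (hq : ∀ t ∈ Ioo a b, 0 ≤ q t) :
    MonotoneOn (fun t ↦ s t * s' t) (Ico a b) := by
  refine monotoneOn_Ico_of_hasDerivWithinAt_nonneg
    (fun t ht ↦ (h.hasDerivWithinAt t ht).mul (h.hasDerivWithinAt_deriv t ht)) fun t ht ↦ ?_
  calc
    0 ≤ s' t ^ 2 + q t * s t ^ 2 := by have := hq t ht; positivity
    _ = s' t * s' t + s t * (q t * s t) := by ring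

theorem monotoneOn_deriv_sq (h : IsLinearSolutionOn q s s' a b) (hq : ∀ t ∈ Ioo a b, 0 ≤ q t)
    (h₀ : 0 ≤ s a * s' a) : MonotoneOn (fun t ↦ s' t ^ 2) (Ico a b) := by
  refine monotoneOn_Ico_of_hasDerivWithinAt_nonneg
    (fun t ht ↦ (h.hasDerivWithinAt_deriv t ht).pow 2) fun t ht ↦ ?_
  have hmul : 0 ≤ s t * s' t :=
    h₀.trans (h.monotoneOn_mul_deriv hq ⟨le_rfl, ht.1.trans ht.2⟩ (Ioo_subset_Ico_self ht) ht.1.le)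
  calc
    0 ≤ 2 * (q t * (s t * s' t)) := by have := hq t ht; positivity
    _ = (2 : ℕ) * s' t ^ (2 - 1) * (q t * s t) := by push_cast; ring

-- `s'` cannot vanish because its square stays above `s'(a)²`, so it keeps its initial sign.
theorem deriv_pos (h : IsLinearSolutionOn q s s' a b) (hq : ∀ t ∈ Ioo a b, 0 ≤ q t)
    (hs : 0 ≤ s a) (hs' : 0 < s' a) (ht : t ∈ Ico a b) : 0 < s' t := by
  have ha : a ∈ Ico a b := ⟨le_rfl, ht.1.trans_lt ht.2⟩
  have hcont : ContinuousOn s' (Ico a b) :=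
    fun x hx ↦ (h.hasDerivWithinAt_deriv x hx).continuousWithinAt
  by_contra! hneg
  obtain ⟨c, hc, hc_zero⟩ := isPreconnected_Ico.intermediate_value ht ha hcont ⟨hneg, hs'.le⟩
  have hsq : s' a ^ 2 ≤ s' c ^ 2 := h.monotoneOn_deriv_sq hq (mul_nonneg hs hs'.le) ha hc hc.1
  rw [hc_zero] at hsq
  nlinarith

theorem pos (h : IsLinearSolutionOn q s s' a b) (hq : ∀ t ∈ Ioo a b, 0 ≤ q t)
    (hs : 0 ≤ s a) (hs' : 0 < s' a) (ht : t ∈ Ioo a b) : 0 < s t :=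
  hs.trans_lt <| strictMonoOn_Ico_of_hasDerivWithinAt_pos h.hasDerivWithinAt
    (fun _ hx ↦ h.deriv_pos hq hs hs' (Ioo_subset_Ico_self hx))
    ⟨le_rfl, ht.1.trans ht.2⟩ (Ioo_subset_Ico_self ht) ht.1

theorem strictMonoOn_deriv (h : IsLinearSolutionOn q s s' a b) (hq : ∀ t ∈ Ioo a b, 0 < q t)
    (hs : 0 ≤ s a) (hs' : 0 < s' a) : StrictMonoOn s' (Ico a b) :=
  strictMonoOn_Ico_of_hasDerivWithinAt_pos h.hasDerivWithinAt_deriv fun t ht ↦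
    mul_pos (hq t ht) (h.pos (fun x hx ↦ (hq x hx).le) hs hs' ht)

theorem tangent_lt (h : IsLinearSolutionOn q s s' a b) (hq : ∀ t ∈ Ioo a b, 0 < q t)
    (hs : 0 ≤ s a) (hs' : 0 < s' a) (ht : t ∈ Ioo a b) : s a + s' a * (t - a) < s t := by
  have ha : a ∈ Ico a b := ⟨le_rfl, ht.1.trans ht.2⟩
  have hmono : StrictMonoOn (fun x ↦ s x - s' a * x) (Ico a b) :=
    strictMonoOn_Ico_of_hasDerivWithinAt_pos
      (fun x hx ↦ (h.hasDerivWithinAt x hx).sub ((hasDerivWithinAt_id x _).const_mul (s' a)))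
      fun x hx ↦ by
        simpa using h.strictMonoOn_deriv hq hs hs' ha (Ioo_subset_Ico_self hx) hx.1
  have hlt : s a - s' a * a < s t - s' a * t := hmono ha (Ioo_subset_Ico_self ht) ht.1
  linarith

end IsLinearSolutionOn

section PainleveII

variable {s s' : ℝ → ℝ} {t : ℝ}

theorem hasDerivWithinAt_painleveII_defect {D : Set ℝ} (σ : ℝ)
    (hs : HasDerivWithinAt s (s' t) D t)
    (hs' : HasDerivWithinAt s' ((2 * s t ^ 2 + t) * s t) D t) :
    HasDerivWithinAt (fun x ↦ s x ^ 4 + 2 * s x ^ 3 / (3 * σ) - s' x ^ 2)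
      (2 * s t * s' t * (s t / σ - t)) D t :=
  (((hs.pow 4).add (((hs.pow 3).const_mul 2).div_const (3 * σ))).sub (hs'.pow 2)).congr_deriv
    (by push_cast; ring)

theorem strictMonoOn_painleveII_defect {T : ℝ}
    (h : IsLinearSolutionOn (fun t ↦ 2 * s t ^ 2 + t) s s' 0 T) (hs : 0 ≤ s 0) (hs' : 0 < s' 0) :
    StrictMonoOn (fun t ↦ s t ^ 4 + 2 * s t ^ 3 / (3 * s' 0) - s' t ^ 2) (Ico 0 T) := by
  have hq : ∀ t ∈ Ioo 0 T, 0 < 2 * s t ^ 2 + t := fun t ht ↦ by have := ht.1; positivity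
  have hq_nonneg : ∀ t ∈ Ioo 0 T, 0 ≤ 2 * s t ^ 2 + t := fun t ht ↦ (hq t ht).le
  refine strictMonoOn_Ico_of_hasDerivWithinAt_pos (fun t ht ↦ hasDerivWithinAt_painleveII_defect _
    (h.hasDerivWithinAt t ht) (h.hasDerivWithinAt_deriv t ht)) fun t ht ↦ ?_
  have hs_pos : 0 < s t := h.pos hq_nonneg hs hs' ht
  have hs'_pos : 0 < s' t := h.deriv_pos hq_nonneg hs hs' (Ioo_subset_Ico_self ht)
  have htangent : s' 0 * t < s t := by linarith [h.tangent_lt hq hs hs' ht]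
  have hdiff : 0 < s t / s' 0 - t := sub_pos.2 ((lt_div_iff₀' hs').2 htangent)
  positivity

end PainleveII

theorem painleveII_first_integral_upper (σ T : ℝ) (hσ : 0 < σ) (hT : 0 < T) (s s' s'' : ℝ → ℝ)
    (hderiv1 : ∀ t ∈ Ico (0:ℝ) T, HasDerivWithinAt s (s' t) (Ico 0 T) t)
    (hderiv2 : ∀ t ∈ Ico (0:ℝ) T, HasDerivWithinAt s' (s'' t) (Ico 0 T) t)
    (hcont : ContinuousOn s'' (Ico 0 T))
    (hs0 : s 0 = 0) (hs'0 : s' 0 = σ)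
    (heq : ∀ t ∈ Ico (0:ℝ) T, s'' t = 2 * s t ^ 3 + t * s t) :
    ∀ t, 0 < t → t < T →
      s' t ^ 2 < σ ^ 2 + s t ^ 4 + 2 * s t ^ 3 / (3 * σ) := by
  intro t ht htT
  have hlin : IsLinearSolutionOn (fun t ↦ 2 * s t ^ 2 + t) s s' 0 T :=
    ⟨hderiv1, fun x hx ↦ (hderiv2 x hx).congr_deriv (by rw [heq x hx]; ring)⟩
  have hlt : s 0 ^ 4 + 2 * s 0 ^ 3 / (3 * s' 0) - s' 0 ^ 2 <
      s t ^ 4 + 2 * s t ^ 3 / (3 * s' 0) - s' t ^ 2 :=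
    strictMonoOn_painleveII_defect hlin hs0.ge (hs'0 ▸ hσ) ⟨le_rfl, hT⟩ ⟨ht.le, htT⟩ ht
  have h_init : s 0 ^ 4 + 2 * s 0 ^ 3 / (3 * s' 0) - s' 0 ^ 2 = -σ ^ 2 := by simp [hs0, hs'0]
  rw [h_init, hs'0] at hlt
  linarith
end

section
/- For every σ > 0, the improper real integral ∫₀^∞ du / √(σ² u⁴ + 1 + 2u³/3) is strictly greater than 2/√(σ² + 5/3). -/
open Set MeasureTheory

open Filter Polynomial

/-!
A polynomial `p` of degree `n` with nonnegative coefficients satisfies `p(u) ≤ p(1)` on `[0, 1]`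
and `p(u) ≤ p(1) uⁿ` on `[1, ∞)`. Hence `1 / √p(u)` is at least `1 / √p(1)` on the first interval
and at least `u ^ (-n / 2) / √p(1)` on the second; for `n > 2` integrating gives
`(1 + 2 / (n - 2)) / √p(1)`, and the bound is strict because `p(0) < p(1)`. The theorem is the case
`n = 4`.
-/

section LowerBound

variable {f : ℝ → ℝ} {m s : ℝ}

theorem sub_mul_lt_intervalIntegral_of_le_of_lt_left {a b : ℝ} (hab : a < b)
    (hf : ContinuousOn f (Icc a b)) (hle : ∀ u ∈ Ioc a b, m ≤ f u) (hlt : m < f a) :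
    (b - a) * m < ∫ u in a..b, f u := by
  have h := intervalIntegral.integral_lt_integral_of_continuousOn_of_le_of_exists_lt hab
    continuousOn_const hf hle ⟨a, left_mem_Icc.2 hab.le, hlt⟩
  rwa [intervalIntegral.integral_const, smul_eq_mul] at h

theorem div_sub_one_le_integral_Ioi_of_mul_rpow_le (hs : 1 < s) (hf : IntegrableOn f (Ioi 1))
    (hle : ∀ u ∈ Ioi 1, m * u ^ (-s) ≤ f u) : m / (s - 1) ≤ ∫ u in Ioi 1, f u := by
  have hs' : -s < -1 := neg_lt_neg hs
  calc m / (s - 1) = ∫ u in Ioi (1 : ℝ), m * u ^ (-s) := by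
        rw [integral_const_mul, integral_Ioi_rpow_of_lt hs' one_pos, Real.one_rpow,
          show -s + 1 = -(s - 1) by ring, neg_div_neg_eq, mul_one_div]
    _ ≤ ∫ u in Ioi 1, f u :=
        setIntegral_mono_on ((integrableOn_Ioi_rpow_of_lt hs' one_pos).const_mul m) hf
          measurableSet_Ioi hle

theorem add_div_sub_one_lt_integral_Ioi (hs : 1 < s) (hcont : ContinuousOn f (Icc 0 1))
    (hint : IntegrableOn f (Ioi 0)) (hlt : m < f 0) (hle : ∀ u ∈ Ioc 0 1, m ≤ f u)
    (htail : ∀ u ∈ Ioi 1, m * u ^ (-s) ≤ f u) :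
    m + m / (s - 1) < ∫ u in Ioi 0, f u := by
  have hint_tail : IntegrableOn f (Ioi 1) := hint.mono_set (Ioi_subset_Ioi zero_le_one)
  rw [← intervalIntegral.integral_interval_add_Ioi hint hint_tail]
  refine add_lt_add_of_lt_of_le ?_ (div_sub_one_le_integral_Ioi_of_mul_rpow_le hs hint_tail htail)
  simpa only [sub_zero, one_mul] using
    sub_mul_lt_intervalIntegral_of_le_of_lt_left zero_lt_one hcont hle hlt

end LowerBound

section NonnegCoeff

variable {R : Type*} [Semiring R] [PartialOrder R] [IsStrictOrderedRing R] {p : R[X]}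

theorem strictMonoOn_eval_of_coeff_nonneg (hp : ∀ i, 0 ≤ p.coeff i) (hdeg : p.natDegree ≠ 0) :
    StrictMonoOn (fun u ↦ p.eval u) (Ici 0) := by
  intro u hu v _ huv
  have hlead : 0 < p.leadingCoeff :=
    (hp _).lt_of_ne' (leadingCoeff_ne_zero.2 (ne_zero_of_natDegree_gt hdeg.bot_lt))
  simp only [eval_eq_sum_range]
  refine Finset.sum_lt_sum
    (fun i _ ↦ mul_le_mul_of_nonneg_left (pow_le_pow_left₀ hu huv.le i) (hp i))
    ⟨p.natDegree, Finset.self_mem_range_succ _, ?_⟩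
  exact mul_lt_mul_of_pos_left (pow_lt_pow_left₀ huv hu hdeg) hlead

theorem eval_le_eval_one_mul_pow_natDegree (hp : ∀ i, 0 ≤ p.coeff i) {u : R} (hu : 1 ≤ u) :
    p.eval u ≤ p.eval 1 * u ^ p.natDegree := by
  simp only [eval_eq_sum_range, one_pow, mul_one, Finset.sum_mul]
  refine Finset.sum_le_sum fun i hi ↦ mul_le_mul_of_nonneg_left ?_ (hp i)
  exact pow_le_pow_right₀ hu (Finset.mem_range_succ_iff.1 hi)

end NonnegCoeff

section OneDivSqrt

variable {p : ℝ[X]}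

theorem one_div_sqrt_pow_eq_rpow {u : ℝ} (hu : 0 ≤ u) (n : ℕ) :
    1 / √(u ^ n) = u ^ (-(n / 2) : ℝ) := by
  rw [Real.sqrt_eq_rpow, ← Real.rpow_natCast_mul hu, mul_one_div, Real.rpow_neg hu, one_div]

theorem continuousOn_one_div_sqrt_eval {s : Set ℝ} (hpos : ∀ u ∈ s, 0 < p.eval u) :
    ContinuousOn (fun u ↦ 1 / √(p.eval u)) s :=
  continuousOn_const.div p.continuousOn.sqrt fun u hu ↦ (Real.sqrt_pos.2 (hpos u hu)).ne'

theorem one_div_sqrt_eval_isBigO_atTop (hp : p ≠ 0) :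
    (fun u ↦ 1 / √(p.eval u)) =O[atTop] fun u : ℝ ↦ u ^ (-(p.natDegree / 2) : ℝ) := by
  have hpow : (fun u : ℝ ↦ u ^ p.natDegree) =O[atTop] fun u ↦ p.eval u := by
    simpa only [eval_pow, eval_X] using isBigO_atTop_of_degree_le (P := X ^ p.natDegree) (Q := p)
      (by rw [degree_X_pow, degree_eq_natDegree hp])
  have hinv : (fun u ↦ (p.eval u)⁻¹) =O[atTop] fun u : ℝ ↦ (u ^ p.natDegree)⁻¹ :=
    hpow.inv_rev <| (eventually_gt_atTop 0).mono fun u hu h ↦ absurd h (pow_pos hu _).ne'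
  have hnonneg : ∀ᶠ u : ℝ in atTop, 0 ≤ (u ^ p.natDegree)⁻¹ :=
    (eventually_ge_atTop 0).mono fun u hu ↦ inv_nonneg.2 (pow_nonneg hu _)
  have hsqrt : (fun u ↦ 1 / √(p.eval u)) =O[atTop] fun u : ℝ ↦ 1 / √(u ^ p.natDegree) := by
    have := hinv.rpow one_half_pos.le hnonneg
    simp only [← Real.sqrt_eq_rpow, Real.sqrt_inv] at this
    simpa only [one_div] using this
  exact hsqrt.congr' .rfl
    ((eventually_ge_atTop 0).mono fun u hu ↦ one_div_sqrt_pow_eq_rpow hu p.natDegree)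

theorem integrableOn_Ioi_one_div_sqrt_eval (hdeg : 2 < p.natDegree) {a : ℝ}
    (hpos : ∀ u ∈ Ici a, 0 < p.eval u) : IntegrableOn (fun u ↦ 1 / √(p.eval u)) (Ioi a) := by
  have hexp : (-(p.natDegree / 2) : ℝ) < -1 := by
    have : (2 : ℝ) < p.natDegree := mod_cast hdeg
    linarith
  have hloc : LocallyIntegrableOn (fun u ↦ 1 / √(p.eval u)) (Ici a) :=
    (continuousOn_one_div_sqrt_eval hpos).locallyIntegrableOn measurableSet_Ici
  exact (hloc.integrableOn_of_isBigO_atTop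
    (one_div_sqrt_eval_isBigO_atTop (ne_zero_of_natDegree_gt hdeg))
    (integrableAtFilter_rpow_atTop_iff.2 hexp)).mono_set Ioi_subset_Ici_self

theorem one_div_sqrt_eval_one_mul_rpow_le (hp : ∀ i, 0 ≤ p.coeff i) {u : ℝ}
    (hpos : 0 < p.eval u) (hu : 1 ≤ u) :
    1 / √(p.eval 1) * u ^ (-(p.natDegree / 2) : ℝ) ≤ 1 / √(p.eval u) := by
  have hu₀ : 0 ≤ u := zero_le_one.trans hu
  rw [← one_div_sqrt_pow_eq_rpow hu₀, one_div_mul_one_div, ← Real.sqrt_mul' _ (pow_nonneg hu₀ _)]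
  exact one_div_le_one_div_of_le (Real.sqrt_pos.2 hpos)
    (Real.sqrt_le_sqrt (eval_le_eval_one_mul_pow_natDegree hp hu))

theorem integral_gt_two_div_sqrt_general (hp : ∀ i, 0 ≤ p.coeff i) (hp₀ : 0 < p.coeff 0)
    (hdeg : 2 < p.natDegree) :
    p.natDegree / (p.natDegree - 2) / √(p.eval 1) < ∫ u in Ioi 0, 1 / √(p.eval u) := by
  have hmono : StrictMonoOn (fun u ↦ p.eval u) (Ici 0) :=
    strictMonoOn_eval_of_coeff_nonneg hp (by lia)
  have hpos : ∀ u ∈ Ici 0, 0 < p.eval u := fun u hu ↦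
    (coeff_zero_eq_eval_zero p ▸ hp₀).trans_le (hmono.monotoneOn self_mem_Ici hu hu)
  have hsqrt : ∀ {u : ℝ}, 0 ≤ u → 0 < √(p.eval u) := fun hu ↦ Real.sqrt_pos.2 (hpos _ hu)
  have hn : (2 : ℝ) < p.natDegree := mod_cast hdeg
  have hconst : p.natDegree / (p.natDegree - 2) / √(p.eval 1) =
      1 / √(p.eval 1) + 1 / √(p.eval 1) / (p.natDegree / 2 - 1) := by
    have : (p.natDegree : ℝ) - 2 ≠ 0 := by linarith
    field_simp
    ring
  rw [hconst]
  refine add_div_sub_one_lt_integral_Ioi (by linarith)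
    (continuousOn_one_div_sqrt_eval fun u hu ↦ hpos u hu.1)
    (integrableOn_Ioi_one_div_sqrt_eval hdeg hpos) ?_ (fun u hu ↦ ?_)
    fun u (hu : 1 < u) ↦ one_div_sqrt_eval_one_mul_rpow_le hp (hpos u ?_) hu.le
  · exact one_div_lt_one_div_of_lt (hsqrt le_rfl) (Real.sqrt_lt_sqrt (hpos 0 self_mem_Ici).le
      (hmono self_mem_Ici (mem_Ici.2 zero_le_one) zero_lt_one))
  · exact one_div_le_one_div_of_le (hsqrt hu.1.le) (Real.sqrt_le_sqrt
      (hmono.monotoneOn hu.1.le (mem_Ici.2 zero_le_one) hu.2))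
  · exact mem_Ici.2 (zero_le_one.trans hu.le)

end OneDivSqrt

/-- For every `σ > 0`, `∫₀^∞ du/√(σ²u⁴ + 1 + 2u³/3) > 2/√(σ² + 5/3)`. -/
theorem integral_gt_two_div_sqrt (σ : ℝ) (hσ : 0 < σ) :
    2 / Real.sqrt (σ ^ 2 + 5 / 3) <
      ∫ u in Ioi (0:ℝ), 1 / Real.sqrt (σ ^ 2 * u ^ 4 + 1 + 2 * u ^ 3 / 3) := by
  set p : ℝ[X] := C (σ ^ 2) * X ^ 4 + 1 + C (2 / 3) * X ^ 3 with hp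
  have hdeg : p.natDegree = 4 := by
    rw [hp]
    compute_degree!
    exact hσ.ne'
  have hcoeff : ∀ i, 0 ≤ p.coeff i := fun i ↦ by
    simp only [hp, coeff_add, coeff_C_mul, coeff_X_pow, coeff_one]
    positivity
  have heval : ∀ u, p.eval u = σ ^ 2 * u ^ 4 + 1 + 2 * u ^ 3 / 3 := fun u ↦ by
    simp only [hp, eval_add, eval_mul, eval_C, eval_pow, eval_X, eval_one]
    ring
  calc 2 / √(σ ^ 2 + 5 / 3) = p.natDegree / (p.natDegree - 2) / √(p.eval 1) := by
        rw [hdeg, heval]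
        ring_nf
    _ < ∫ u in Ioi 0, 1 / √(p.eval u) :=
        integral_gt_two_div_sqrt_general hcoeff (by simp [hp]) (by lia)
    _ = ∫ u in Ioi 0, 1 / √(σ ^ 2 * u ^ 4 + 1 + 2 * u ^ 3 / 3) := by simp only [heval]
end

section
/- Let σ > 0, let T > 0, and let s : ℝ → ℝ be twice continuously differentiable on [0,T) with s(0) = 0, s'(0) = σ, and s''(t) = 2 s(t)³ + t s(t) for all t ∈ [0,T). If s(t) tends to +∞ as t tends to T from the left (i.e., s blows up at time T), then T > 2/√(σ² + 5/3). -/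
open Set MeasureTheory intervalIntegral Real

/-!
For `ρ > 0` the odd function `w(t) = 1 / (ρ - t) - 1 / (ρ + t)` satisfies
`w'' - 2 w³ - t w = 2 t (6 - t (ρ² - t²)) / (ρ² - t²)²`, so it is a supersolution of PII on `[0, ρ)`
as long as `t (ρ² - t²) ≤ 6` there, that is, `ρ⁶ ≤ 3⁵`. Its slope at `0` is `2 / ρ²`. As the
right-hand side `2 s³ + t s` increases with `s` for `t ≥ 0`, a solution with a smaller slope at `0`
stays below `w` and cannot blow up before time `ρ`. For slope `σ`, AM-GM allows every
`ρ < 2 / √(σ² + 1)`.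
-/

open scoped Topology

section Comparison

variable {a b : ℝ}

theorem monotoneOn_Icc_of_hasDerivWithinAt_nonneg {f f' : ℝ → ℝ}
    (hf : ∀ t ∈ Icc a b, HasDerivWithinAt f (f' t) (Icc a b) t)
    (hf' : ∀ t ∈ Ioo a b, 0 ≤ f' t) : MonotoneOn f (Icc a b) :=
  monotoneOn_of_hasDerivWithinAt_nonneg (convex_Icc a b)
    (fun t ht ↦ (hf t ht).continuousWithinAt)
    (fun t ht ↦ (hf t (interior_subset ht)).mono interior_subset)
    (fun t ht ↦ hf' t (interior_Icc (a := a) ▸ ht))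

theorem exists_first_nonpos_of_continuousOn {f : ℝ → ℝ} (hf : ContinuousOn f (Icc a b))
    {t : ℝ} (ht : t ∈ Icc a b) (hft : f t ≤ 0) :
    ∃ τ ∈ Icc a b, f τ ≤ 0 ∧ ∀ x ∈ Ico a τ, 0 < f x := by
  have hclosed : IsClosed (Icc a b ∩ f ⁻¹' Iic 0) :=
    hf.preimage_isClosed_of_isClosed isClosed_Icc isClosed_Iic
  obtain ⟨τ, ⟨hτ, hfτ⟩, hleast⟩ :=
    (isCompact_Icc.of_isClosed_subset hclosed inter_subset_left).exists_isLeast ⟨t, ht, hft⟩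
  refine ⟨τ, hτ, hfτ, fun x hx ↦ ?_⟩
  by_contra! hfx
  exact hx.2.not_ge (hleast ⟨⟨hx.1, hx.2.le.trans hτ.2⟩, hfx⟩)

variable {d d' d'' : ℝ → ℝ}

theorem deriv_pos_of_second_deriv_nonneg_where_nonneg
    (hd : ∀ t ∈ Icc a b, HasDerivWithinAt d (d' t) (Icc a b) t)
    (hd' : ∀ t ∈ Icc a b, HasDerivWithinAt d' (d'' t) (Icc a b) t)
    (hda : 0 ≤ d a) (hd'a : 0 < d' a) (hd'' : ∀ t ∈ Icc a b, 0 ≤ d t → 0 ≤ d'' t) :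
    ∀ t ∈ Icc a b, 0 < d' t := by
  intro t ht
  by_contra! hneg
  obtain ⟨τ, hτ, hd'τ, hpos⟩ :=
    exists_first_nonpos_of_continuousOn (fun t ht ↦ (hd' t ht).continuousWithinAt) ht hneg
  have hsub : Icc a τ ⊆ Icc a b := Icc_subset_Icc_right hτ.2
  have left_mem : a ∈ Icc a τ := left_mem_Icc.2 hτ.1
  have d_mono : MonotoneOn d (Icc a τ) :=
    monotoneOn_Icc_of_hasDerivWithinAt_nonneg (fun x hx ↦ (hd x (hsub hx)).mono hsub)
      fun x hx ↦ (hpos x (Ioo_subset_Ico_self hx)).le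
  have d_nonneg : ∀ x ∈ Icc a τ, 0 ≤ d x := fun x hx ↦ hda.trans (d_mono left_mem hx hx.1)
  have d'_mono : MonotoneOn d' (Icc a τ) :=
    monotoneOn_Icc_of_hasDerivWithinAt_nonneg (fun x hx ↦ (hd' x (hsub hx)).mono hsub)
      fun x hx ↦ have hx := Ioo_subset_Icc_self hx; hd'' x (hsub hx) (d_nonneg x hx)
  exact (hd'a.trans_le (d'_mono left_mem (right_mem_Icc.2 hτ.1) hτ.1)).not_ge hd'τ

theorem nonneg_of_second_deriv_nonneg_where_nonneg
    (hd : ∀ t ∈ Icc a b, HasDerivWithinAt d (d' t) (Icc a b) t)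
    (hd' : ∀ t ∈ Icc a b, HasDerivWithinAt d' (d'' t) (Icc a b) t)
    (hda : 0 ≤ d a) (hd'a : 0 < d' a) (hd'' : ∀ t ∈ Icc a b, 0 ≤ d t → 0 ≤ d'' t) :
    ∀ t ∈ Icc a b, 0 ≤ d t := by
  intro t ht
  have d'_pos := deriv_pos_of_second_deriv_nonneg_where_nonneg hd hd' hda hd'a hd''
  have d_mono : MonotoneOn d (Icc a b) :=
    monotoneOn_Icc_of_hasDerivWithinAt_nonneg hd
      fun x hx ↦ (d'_pos x (Ioo_subset_Icc_self hx)).le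
  exact hda.trans (d_mono (left_mem_Icc.2 (ht.1.trans ht.2)) ht ht.1)

theorem subsolution_le_supersolution {F : ℝ → ℝ → ℝ} {u u' u'' w w' w'' : ℝ → ℝ}
    (hF : ∀ t ∈ Icc a b, Monotone (F t))
    (hu : ∀ t ∈ Icc a b, HasDerivWithinAt u (u' t) (Icc a b) t)
    (hu' : ∀ t ∈ Icc a b, HasDerivWithinAt u' (u'' t) (Icc a b) t)
    (hw : ∀ t ∈ Icc a b, HasDerivWithinAt w (w' t) (Icc a b) t)
    (hw' : ∀ t ∈ Icc a b, HasDerivWithinAt w' (w'' t) (Icc a b) t)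
    (hsub : ∀ t ∈ Icc a b, u'' t ≤ F t (u t)) (hsuper : ∀ t ∈ Icc a b, F t (w t) ≤ w'' t)
    (ha : u a ≤ w a) (ha' : u' a < w' a) :
    ∀ t ∈ Icc a b, u t ≤ w t := by
  have diff_nonneg := nonneg_of_second_deriv_nonneg_where_nonneg
    (fun t ht ↦ (hw t ht).sub (hu t ht)) (fun t ht ↦ (hw' t ht).sub (hu' t ht))
    (sub_nonneg.2 ha) (sub_pos.2 ha') fun t ht hle ↦ sub_nonneg.2 <| calc
      u'' t ≤ F t (u t) := hsub t ht
      _ ≤ F t (w t) := hF t ht (sub_nonneg.1 hle)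
      _ ≤ w'' t := hsuper t ht
  exact fun t ht ↦ sub_nonneg.1 (diff_nonneg t ht)

end Comparison

/-- The right-hand side of the second Painlevé equation `s'' = 2 s³ + t s`, as a function of the
time `t` and the value `x` of the solution. -/
def painleveIIRhs (t x : ℝ) : ℝ := 2 * x ^ 3 + t * x

theorem monotone_painleveIIRhs {t : ℝ} (ht : 0 ≤ t) : Monotone (painleveIIRhs t) := by
  intro x y hxy
  have cube_le : x ^ 3 ≤ y ^ 3 := Odd.pow_le_pow (by decide) |>.2 hxy
  unfold painleveIIRhs
  gcongr

/-- The function `2 t / (ρ² - t²)`, written in partial fractions. It blows up at `ρ` and serves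
as a supersolution of the second Painlevé equation on `[0, ρ)`. -/
noncomputable def painleveIIBarrier (ρ t : ℝ) : ℝ := (ρ - t)⁻¹ - (ρ + t)⁻¹

namespace painleveIIBarrier

variable {ρ t : ℝ}

theorem apply_zero (ρ : ℝ) : painleveIIBarrier ρ 0 = 0 := by simp [painleveIIBarrier]

theorem hasDerivAt (hsub : ρ - t ≠ 0) (hadd : ρ + t ≠ 0) :
    HasDerivAt (painleveIIBarrier ρ) (((ρ - t) ^ 2)⁻¹ + ((ρ + t) ^ 2)⁻¹) t := by
  refine ((((hasDerivAt_id t).const_sub ρ).fun_inv hsub).sub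
    (((hasDerivAt_id t).const_add ρ).fun_inv hadd)).congr_deriv ?_
  simp only [id]
  field_simp
  ring

theorem hasDerivAt_deriv (hsub : ρ - t ≠ 0) (hadd : ρ + t ≠ 0) :
    HasDerivAt (fun t ↦ ((ρ - t) ^ 2)⁻¹ + ((ρ + t) ^ 2)⁻¹)
      (2 * ((ρ - t) ^ 3)⁻¹ - 2 * ((ρ + t) ^ 3)⁻¹) t := by
  refine (((((hasDerivAt_id t).const_sub ρ).fun_pow 2).fun_inv (pow_ne_zero 2 hsub)).add
    ((((hasDerivAt_id t).const_add ρ).fun_pow 2).fun_inv (pow_ne_zero 2 hadd))).congr_deriv ?_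
  simp only [id]
  field_simp
  ring

theorem second_deriv_sub_painleveIIRhs (hsub : ρ - t ≠ 0) (hadd : ρ + t ≠ 0) :
    2 * ((ρ - t) ^ 3)⁻¹ - 2 * ((ρ + t) ^ 3)⁻¹ - painleveIIRhs t (painleveIIBarrier ρ t) =
      2 * t * (6 - t * (ρ ^ 2 - t ^ 2)) / ((ρ - t) * (ρ + t)) ^ 2 := by
  simp only [painleveIIRhs, painleveIIBarrier]
  field_simp
  ring

theorem mul_sq_sub_sq_le_six (hρ : ρ ^ 6 ≤ 3 ^ 5) (htρ : t ^ 2 ≤ ρ ^ 2) :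
    t * (ρ ^ 2 - t ^ 2) ≤ 6 := by
  have factored_nonneg : 0 ≤ (ρ ^ 2 - 3 * t ^ 2) ^ 2 * (4 * ρ ^ 2 - 3 * t ^ 2) :=
    mul_nonneg (sq_nonneg _) (by linarith [sq_nonneg ρ])
  refine le_of_sq_le_sq ?_ (by norm_num)
  calc
    (t * (ρ ^ 2 - t ^ 2)) ^ 2
      = (4 * ρ ^ 6 - (ρ ^ 2 - 3 * t ^ 2) ^ 2 * (4 * ρ ^ 2 - 3 * t ^ 2)) / 27 := by ring
    _ ≤ 6 ^ 2 := by linarith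

theorem painleveIIRhs_le_second_deriv (hρ : ρ ^ 6 ≤ 3 ^ 5) (ht : t ∈ Ico 0 ρ) :
    painleveIIRhs t (painleveIIBarrier ρ t) ≤ 2 * ((ρ - t) ^ 3)⁻¹ - 2 * ((ρ + t) ^ 3)⁻¹ := by
  obtain ⟨ht0, htρ⟩ := ht
  have le_six := mul_sq_sub_sq_le_six hρ (pow_le_pow_left₀ ht0 htρ.le 2)
  rw [← sub_nonneg,
    second_deriv_sub_painleveIIRhs (sub_pos.2 htρ).ne' (by linarith : 0 < ρ + t).ne']
  exact div_nonneg (mul_nonneg (by positivity) (sub_nonneg.2 le_six)) (sq_nonneg _)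

theorem le_inv_sub {T : ℝ} (hTρ : T < ρ) (ht : t ∈ Ico 0 T) :
    painleveIIBarrier ρ t ≤ (ρ - T)⁻¹ := calc
  painleveIIBarrier ρ t ≤ (ρ - t)⁻¹ :=
    sub_le_self _ (inv_nonneg.2 (by linarith [ht.1, ht.2]))
  _ ≤ (ρ - T)⁻¹ := inv_anti₀ (sub_pos.2 hTρ) (by linarith [ht.2])

end painleveIIBarrier

theorem exists_between_mul_sq_lt {a c R M : ℝ} (ha : 0 ≤ a) (haR : a < R) (hM : 0 < M)
    (hc : c * R ^ 2 ≤ M) : ∃ ρ, a < ρ ∧ ρ < R ∧ c * ρ ^ 2 < M := by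
  obtain ⟨ρ, haρ, hρR⟩ := exists_between haR
  refine ⟨ρ, haρ, hρR, ?_⟩
  rcases le_or_gt c 0 with hc0 | hc0
  · exact (mul_nonpos_of_nonpos_of_nonneg hc0 (sq_nonneg ρ)).trans_lt hM
  · exact (mul_lt_mul_of_pos_left
      (pow_lt_pow_left₀ hρR (ha.trans haρ.le) two_ne_zero) hc0).trans_le hc

section Subsolution

variable {T : ℝ} {s s' s'' : ℝ → ℝ}

theorem painleveII_subsolution_le_barrier {ρ : ℝ}
    (hderiv1 : ∀ t ∈ Ico 0 T, HasDerivWithinAt s (s' t) (Ico 0 T) t)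
    (hderiv2 : ∀ t ∈ Ico 0 T, HasDerivWithinAt s' (s'' t) (Ico 0 T) t)
    (hs0 : s 0 ≤ 0) (hsub : ∀ t ∈ Ico 0 T, s'' t ≤ 2 * s t ^ 3 + t * s t)
    (hTρ : T ≤ ρ) (hρ : ρ ^ 6 ≤ 3 ^ 5) (hslope : s' 0 * ρ ^ 2 < 2) :
    ∀ t ∈ Ico 0 T, s t ≤ painleveIIBarrier ρ t := by
  intro b hb
  have hρ0 : 0 < ρ := (hb.1.trans_lt hb.2).trans_le hTρ
  have hIcc : Icc 0 b ⊆ Ico 0 T := Icc_subset_Ico_right hb.2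
  have sub_ne : ∀ t ∈ Icc 0 b, ρ - t ≠ 0 := fun t ht ↦ by linarith [(hIcc ht).2]
  have add_ne : ∀ t ∈ Icc 0 b, ρ + t ≠ 0 := fun t ht ↦ by linarith [ht.1]
  have slope_lt : s' 0 < ((ρ - 0) ^ 2)⁻¹ + ((ρ + 0) ^ 2)⁻¹ := calc
    s' 0 < 2 / ρ ^ 2 := (lt_div_iff₀ (by positivity)).2 hslope
    _ = ((ρ - 0) ^ 2)⁻¹ + ((ρ + 0) ^ 2)⁻¹ := by ring
  exact subsolution_le_supersolution (F := painleveIIRhs)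
    (fun t ht ↦ monotone_painleveIIRhs ht.1)
    (fun t ht ↦ (hderiv1 t (hIcc ht)).mono hIcc)
    (fun t ht ↦ (hderiv2 t (hIcc ht)).mono hIcc)
    (fun t ht ↦ (painleveIIBarrier.hasDerivAt (sub_ne t ht) (add_ne t ht)).hasDerivWithinAt)
    (fun t ht ↦ (painleveIIBarrier.hasDerivAt_deriv (sub_ne t ht) (add_ne t ht)).hasDerivWithinAt)
    (fun t ht ↦ hsub t (hIcc ht))
    (fun t ht ↦ painleveIIBarrier.painleveIIRhs_le_second_deriv hρ
      ⟨ht.1, (hIcc ht).2.trans_le hTρ⟩)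
    (hs0.trans_eq (painleveIIBarrier.apply_zero ρ).symm) slope_lt b (right_mem_Icc.2 hb.1)

theorem painleveII_blowup_time_lower_general {R : ℝ} (hT : 0 < T)
    (hderiv1 : ∀ t ∈ Ico 0 T, HasDerivWithinAt s (s' t) (Ico 0 T) t)
    (hderiv2 : ∀ t ∈ Ico 0 T, HasDerivWithinAt s' (s'' t) (Ico 0 T) t)
    (hs0 : s 0 ≤ 0) (hsub : ∀ t ∈ Ico 0 T, s'' t ≤ 2 * s t ^ 3 + t * s t)
    (hslope : s' 0 * R ^ 2 ≤ 2) (hR : R ^ 6 ≤ 3 ^ 5)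
    (hblowup : Filter.Tendsto s (𝓝[<] T) Filter.atTop) :
    R ≤ T := by
  by_contra! hTR
  obtain ⟨ρ, hTρ, hρR, hslopeρ⟩ := exists_between_mul_sq_lt hT.le hTR two_pos hslope
  have hρ : ρ ^ 6 ≤ 3 ^ 5 := (pow_le_pow_left₀ (hT.trans hTρ).le hρR.le 6).trans hR
  have bounded : ∀ t ∈ Ico 0 T, s t ≤ (ρ - T)⁻¹ := fun t ht ↦
    (painleveII_subsolution_le_barrier hderiv1 hderiv2 hs0 hsub hTρ.le hρ hslopeρ t ht).trans
      (painleveIIBarrier.le_inv_sub hTρ ht)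
  exact Filter.not_isBoundedUnder_of_tendsto_atTop hblowup
    (Filter.isBoundedUnder_of_eventually_le (Filter.eventually_of_mem (Ico_mem_nhdsLT hT) bounded))

end Subsolution

theorem mul_two_div_sqrt_sq_le_two (σ : ℝ) : σ * (2 / √(σ ^ 2 + 1)) ^ 2 ≤ 2 := by
  rw [div_pow, sq_sqrt (by positivity), mul_div_assoc', div_le_iff₀ (by positivity)]
  linarith [two_mul_le_add_sq σ 1]

theorem two_div_sqrt_pow_six_le (σ : ℝ) : (2 / √(σ ^ 2 + 1)) ^ 6 ≤ 3 ^ 5 := by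
  have le_two : 2 / √(σ ^ 2 + 1) ≤ 2 :=
    div_le_self two_pos.le (one_le_sqrt.2 (by linarith [sq_nonneg σ]))
  exact (pow_le_pow_left₀ (by positivity) le_two 6).trans (by norm_num)

theorem painleveII_blowup_time_lower (σ T : ℝ) (hσ : 0 < σ) (hT : 0 < T) (s s' s'' : ℝ → ℝ)
    (hderiv1 : ∀ t ∈ Ico (0:ℝ) T, HasDerivWithinAt s (s' t) (Ico 0 T) t)
    (hderiv2 : ∀ t ∈ Ico (0:ℝ) T, HasDerivWithinAt s' (s'' t) (Ico 0 T) t)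
    (hcont : ContinuousOn s'' (Ico 0 T))
    (hs0 : s 0 = 0) (hs'0 : s' 0 = σ)
    (heq : ∀ t ∈ Ico (0:ℝ) T, s'' t = 2 * s t ^ 3 + t * s t) :
    Filter.Tendsto s (nhdsWithin T (Iio T)) Filter.atTop →
      2 / Real.sqrt (σ ^ 2 + 5 / 3) < T := by
  intro hblowup
  calc
    2 / √(σ ^ 2 + 5 / 3) < 2 / √(σ ^ 2 + 1) := by gcongr; norm_num
    _ ≤ T := painleveII_blowup_time_lower_general hT hderiv1 hderiv2 hs0.le
      (fun t ht ↦ (heq t ht).le) (hs'0 ▸ mul_two_div_sqrt_sq_le_two σ)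
      (two_div_sqrt_pow_six_le σ) hblowup
end

section
/- Let σ > 0, let T > 0, and let s : ℝ → ℝ be twice continuously differentiable on [0,T) with s(0) = 0, s'(0) = σ, and s''(t) = 2 s(t)³ − t s(t) for all t ∈ [0,T). Then for every τ with 0 < τ < T and τ < 2σ one has s(τ) > τ · √(σ² − τ²/4); moreover s'(t) > 0 for all t ∈ [0,T) with t < 2σ. -/
open Set

/-! Along a solution, the energy `E = s'² - s⁴ + t s²` has derivative `s² ≥ 0`, and completing the
square gives `s'² = E + (s² - t/2)² - t²/4`. Hence `s'² ≥ E(a) - t²/4` for `t ≥ a`, so `s'` cannot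
change sign while `t²/4 < E(a)`, and the mean value theorem turns the resulting lower bound on `s'`
into one on `s`. For `s(0) = 0`, `s'(0) = σ` one has `E(0) = σ²`. -/

theorem pos_of_isPreconnected_of_forall_ne_zero {X α : Type*} [TopologicalSpace X]
    [LinearOrder α] [TopologicalSpace α] [OrderClosedTopology α] [Zero α]
    {S : Set X} {f : X → α} (hS : IsPreconnected S) (hf : ContinuousOn f S)
    (hne : ∀ x ∈ S, f x ≠ 0) {a x : X} (ha : a ∈ S) (hpos : 0 < f a) (hx : x ∈ S) :
    0 < f x := by
  by_contra hle
  obtain ⟨y, hy, hfy⟩ := hS.intermediate_value hx ha hf ⟨not_lt.mp hle, hpos.le⟩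
  exact hne y hy hfy

/-- Solutions on `D` of the time-reversed homogeneous second Painlevé equation
`s'' = 2 s³ - t s`. The derivative `s'` is carried as a separate function, and derivatives are taken
within `D`, hence one-sided at endpoints of `D`. -/
structure IsPainleveIINegSolutionOn (s s' : ℝ → ℝ) (D : Set ℝ) : Prop where
  hasDerivWithinAt : ∀ t ∈ D, HasDerivWithinAt s (s' t) D t
  hasDerivWithinAt_deriv : ∀ t ∈ D, HasDerivWithinAt s' (2 * s t ^ 3 - t * s t) D t

/-- The energy `s'² - s⁴ + t s²` of the equation `s'' = 2 s³ - t s`. It is twice the Hamiltonian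
of the equation; it would be conserved if the coefficient `t` were frozen. -/
def painleveIINegEnergy (s s' : ℝ → ℝ) (t : ℝ) : ℝ :=
  s' t ^ 2 - s t ^ 4 + t * s t ^ 2

theorem painleveIINegEnergy_sub_le_sq (s s' : ℝ → ℝ) (t : ℝ) :
    painleveIINegEnergy s s' t - t ^ 2 / 4 ≤ s' t ^ 2 := by
  have completed_square :
      s' t ^ 2 = painleveIINegEnergy s s' t - t ^ 2 / 4 + (s t ^ 2 - t / 2) ^ 2 := by
    unfold painleveIINegEnergy
    ring
  rw [completed_square]
  exact le_add_of_nonneg_right (sq_nonneg _)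

namespace IsPainleveIINegSolutionOn

variable {s s' : ℝ → ℝ} {D D' : Set ℝ} {a b t : ℝ}

theorem mono (h : IsPainleveIINegSolutionOn s s' D) (hD : D' ⊆ D) :
    IsPainleveIINegSolutionOn s s' D' where
  hasDerivWithinAt t ht := (h.hasDerivWithinAt t (hD ht)).mono hD
  hasDerivWithinAt_deriv t ht := (h.hasDerivWithinAt_deriv t (hD ht)).mono hD

theorem continuousOn (h : IsPainleveIINegSolutionOn s s' D) : ContinuousOn s D :=
  fun t ht => (h.hasDerivWithinAt t ht).continuousWithinAt

theorem continuousOn_deriv (h : IsPainleveIINegSolutionOn s s' D) : ContinuousOn s' D :=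
  fun t ht => (h.hasDerivWithinAt_deriv t ht).continuousWithinAt

theorem hasDerivWithinAt_energy (h : IsPainleveIINegSolutionOn s s' D) (ht : t ∈ D) :
    HasDerivWithinAt (painleveIINegEnergy s s') (s t ^ 2) D t := by
  have hs := h.hasDerivWithinAt t ht
  have hs' := h.hasDerivWithinAt_deriv t ht
  refine (((hs'.pow 2).sub (hs.pow 4)).add
    ((hasDerivWithinAt_id t D).mul (hs.pow 2))).congr_deriv ?_
  simp only [id_eq, Pi.pow_apply]
  ring

theorem monotoneOn_energy (h : IsPainleveIINegSolutionOn s s' D) (hD : Convex ℝ D) :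
    MonotoneOn (painleveIINegEnergy s s') D :=
  monotoneOn_of_hasDerivWithinAt_nonneg hD
    (fun _ ht => (h.hasDerivWithinAt_energy ht).continuousWithinAt)
    (fun _ ht => (h.hasDerivWithinAt_energy (interior_subset ht)).mono interior_subset)
    (fun t _ => sq_nonneg (s t))

theorem energy_left_sub_le_sq (h : IsPainleveIINegSolutionOn s s' (Icc a b)) (ht : t ∈ Icc a b) :
    painleveIINegEnergy s s' a - t ^ 2 / 4 ≤ s' t ^ 2 :=
  calc painleveIINegEnergy s s' a - t ^ 2 / 4
      ≤ painleveIINegEnergy s s' t - t ^ 2 / 4 := by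
        gcongr
        exact h.monotoneOn_energy (convex_Icc a b) (left_mem_Icc.mpr (ht.1.trans ht.2)) ht ht.1
    _ ≤ s' t ^ 2 := painleveIINegEnergy_sub_le_sq s s' t

theorem deriv_pos (h : IsPainleveIINegSolutionOn s s' (Icc a b)) (hab : |a| ≤ b)
    (ha : 0 < s' a) (hE : b ^ 2 / 4 < painleveIINegEnergy s s' a) (ht : t ∈ Icc a b) :
    0 < s' t := by
  have hne : ∀ u ∈ Icc a b, s' u ≠ 0 := by
    intro u hu
    have hub : u ^ 2 ≤ b ^ 2 := sq_le_sq' ((abs_le.mp hab).1.trans hu.1) hu.2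
    have hsq : 0 < s' u ^ 2 := by linarith [h.energy_left_sub_le_sq hu]
    exact (pow_ne_zero_iff two_ne_zero).mp hsq.ne'
  exact pos_of_isPreconnected_of_forall_ne_zero isPreconnected_Icc h.continuousOn_deriv hne
    (left_mem_Icc.mpr (ht.1.trans ht.2)) ha ht

theorem sqrt_lt_deriv (h : IsPainleveIINegSolutionOn s s' (Icc a b)) (hab : |a| ≤ b)
    (ha : 0 < s' a) (hE : b ^ 2 / 4 < painleveIINegEnergy s s' a) (ht : t ∈ Ioo a b) :
    √(painleveIINegEnergy s s' a - b ^ 2 / 4) < s' t := by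
  have htb : t ^ 2 < b ^ 2 := sq_lt_sq' ((abs_le.mp hab).1.trans_lt ht.1) ht.2
  rw [Real.sqrt_lt' (h.deriv_pos hab ha hE (Ioo_subset_Icc_self ht))]
  linarith [h.energy_left_sub_le_sq (Ioo_subset_Icc_self ht)]

theorem mul_sqrt_lt_sub (h : IsPainleveIINegSolutionOn s s' (Icc a b)) (hlt : a < b)
    (hab : |a| ≤ b) (ha : 0 < s' a) (hE : b ^ 2 / 4 < painleveIINegEnergy s s' a) :
    (b - a) * √(painleveIINegEnergy s s' a - b ^ 2 / 4) < s b - s a := by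
  obtain ⟨c, hc, hslope⟩ := exists_hasDerivAt_eq_slope s s' hlt h.continuousOn fun t ht =>
    (h.hasDerivWithinAt t (Ioo_subset_Icc_self ht)).hasDerivAt (Icc_mem_nhds ht.1 ht.2)
  rw [← lt_div_iff₀' (sub_pos.mpr hlt), ← hslope]
  exact h.sqrt_lt_deriv hab ha hE hc

end IsPainleveIINegSolutionOn

theorem painleveIIneg_monotone_bound_general {a T : ℝ} {s s' : ℝ → ℝ}
    (h : IsPainleveIINegSolutionOn s s' (Ico a T)) (ha : 0 < s' a) :
    (∀ τ, a < τ → τ < T → |a| ≤ τ → τ ^ 2 / 4 < painleveIINegEnergy s s' a →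
      (τ - a) * √(painleveIINegEnergy s s' a - τ ^ 2 / 4) < s τ - s a) ∧
    (∀ t ∈ Ico a T, |a| ≤ t → t ^ 2 / 4 < painleveIINegEnergy s s' a → 0 < s' t) :=
  ⟨fun _ hlt hτT haτ hE =>
      (h.mono (Icc_subset_Ico_right hτT)).mul_sqrt_lt_sub hlt haτ ha hE,
    fun _ ht hat hE =>
      (h.mono (Icc_subset_Ico_right ht.2)).deriv_pos hat ha hE (right_mem_Icc.mpr ht.1)⟩

/-- For a solution of `s'' = 2s³ − ts` with `s(0) = 0`, `s'(0) = σ > 0`: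
`s(τ) > τ√(σ² − τ²/4)` for `0 < τ < min T (2σ)`, and `s' > 0` on `[0, T) ∩ [0, 2σ)`. -/
theorem painleveIIneg_monotone_bound (σ T : ℝ) (hσ : 0 < σ) (hT : 0 < T) (s s' s'' : ℝ → ℝ)
    (hderiv1 : ∀ t ∈ Ico (0:ℝ) T, HasDerivWithinAt s (s' t) (Ico 0 T) t)
    (hderiv2 : ∀ t ∈ Ico (0:ℝ) T, HasDerivWithinAt s' (s'' t) (Ico 0 T) t)
    (hcont : ContinuousOn s'' (Ico 0 T))
    (hs0 : s 0 = 0) (hs'0 : s' 0 = σ)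
    (heq : ∀ t ∈ Ico (0:ℝ) T, s'' t = 2 * s t ^ 3 - t * s t) :
    (∀ τ, 0 < τ → τ < T → τ < 2 * σ → τ * Real.sqrt (σ ^ 2 - τ ^ 2 / 4) < s τ) ∧
    (∀ t ∈ Ico (0:ℝ) T, t < 2 * σ → 0 < s' t) := by
  have hsol : IsPainleveIINegSolutionOn s s' (Ico 0 T) :=
    ⟨hderiv1, fun t ht => heq t ht ▸ hderiv2 t ht⟩
  have henergy : painleveIINegEnergy s s' 0 = σ ^ 2 := by
    simp [painleveIINegEnergy, hs0, hs'0]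
  have hlt {t : ℝ} (h0 : 0 ≤ t) (ht : t < 2 * σ) : t ^ 2 / 4 < σ ^ 2 := by nlinarith
  obtain ⟨hbound, hpos⟩ := painleveIIneg_monotone_bound_general hsol (hs'0 ▸ hσ)
  simp only [henergy, hs0, sub_zero, abs_zero] at hbound hpos
  exact ⟨fun τ h0 hτT hτσ => hbound τ h0 hτT h0.le (hlt h0.le hτσ),
    fun t ht htσ => hpos t ht ht.1 (hlt ht.1 htσ)⟩
end

section
/- Let t₀ > 0 and let s : ℝ → ℝ be twice continuously differentiable on [t₀,∞) with s''(t) = 2 s(t)³ − t s(t) for all t ≥ t₀. It is impossible that both 2 s(t)² − t > 0 and 4 s(t) s'(t) − 1 > 0 hold for all t ≥ t₀. (Equivalently: if r(t) = 2 s(t)² − t satisfies r > 0 and r' > 0 from some time onward, then s undergoes finite-time blow-up and cannot be defined on all of [t₀,∞).) -/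
open Set

/-!
Where `t ≤ 2 s²` the equation `s'' = s (2 s² - t)` makes a positive solution convex, and a convex
function bounded below by `√(t / 2)` grows at least linearly. Hence eventually `t ≤ s²`, so that
`s'' ≥ s³`. Multiplying by `s'` and integrating gives `s' ≥ k s²` for some `k > 0`, and this Riccati
inequality makes `1 / s` vanish in finite time. Since the equation is odd and a solution with
`0 < t ≤ 2 s²` never vanishes, the case of negative `s` is the same.
-/

open Filter

section DifferentialInequalities

variable {f f' f'' : ℝ → ℝ} {D : Set ℝ} {a c k : ℝ}

theorem monotoneOn_of_hasDerivWithinAt_self_nonneg (hD : Convex ℝ D)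
    (hf : ∀ t ∈ D, HasDerivWithinAt f (f' t) D t) (hf' : ∀ t ∈ D, 0 ≤ f' t) :
    MonotoneOn f D :=
  monotoneOn_of_hasDerivWithinAt_nonneg hD (fun t ht ↦ (hf t ht).continuousWithinAt)
    (fun t ht ↦ (hf t (interior_subset ht)).mono interior_subset)
    fun t ht ↦ hf' t (interior_subset ht)

theorem mul_sub_le_sub_of_le_hasDerivWithinAt (hD : Convex ℝ D)
    (hf : ∀ t ∈ D, HasDerivWithinAt f (f' t) D t) (hf' : ∀ t ∈ D, c ≤ f' t) {x y : ℝ}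
    (hx : x ∈ D) (hy : y ∈ D) (hxy : x ≤ y) : c * (y - x) ≤ f y - f x := by
  have hmono : MonotoneOn (fun t ↦ f t - c * t) D :=
    monotoneOn_of_hasDerivWithinAt_self_nonneg hD
      (fun t ht ↦ (hf t ht).fun_sub (hasDerivAt_const_mul c).hasDerivWithinAt)
      fun t ht ↦ sub_nonneg.2 (hf' t ht)
  linarith [hmono hx hy hxy]

theorem exists_hasDerivWithinAt_pos_of_not_bddAbove
    (hf : ∀ t ∈ Ici a, HasDerivWithinAt f (f' t) (Ici a) t) (hunbdd : ¬ BddAbove (f '' Ici a)) :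
    ∃ t ∈ Ici a, 0 < f' t := by
  by_contra! hf'
  refine hunbdd ⟨f a, forall_mem_image.2 fun t ht ↦ ?_⟩
  have hneg_mono : MonotoneOn (fun t ↦ -f t) (Ici a) :=
    monotoneOn_of_hasDerivWithinAt_self_nonneg (convex_Ici a) (fun t ht ↦ (hf t ht).fun_neg)
      fun t ht ↦ neg_nonneg.2 (hf' t ht)
  exact neg_le_neg_iff.1 (hneg_mono self_mem_Ici ht ht)

theorem eventually_le_sq_of_le_hasDerivWithinAt (hc : 0 < c)
    (hf : ∀ t ∈ Ici a, HasDerivWithinAt f (f' t) (Ici a) t) (hf' : ∀ t ∈ Ici a, c ≤ f' t) :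
    ∀ᶠ t in atTop, t ≤ f t ^ 2 := by
  filter_upwards [eventually_ge_atTop a, eventually_ge_atTop ((c * a - f a) / (c / 2)),
    eventually_ge_atTop (4 / c ^ 2)] with t hat hlinear hlarge
  have ht : 0 ≤ t := (by positivity : 0 ≤ 4 / c ^ 2).trans hlarge
  have hhalf : c / 2 * t ≤ f t := by
    have hmean : c * (t - a) ≤ f t - f a :=
      mul_sub_le_sub_of_le_hasDerivWithinAt (convex_Ici a) hf hf' self_mem_Ici hat hat
    rw [div_le_iff₀' (by positivity)] at hlinear
    linarith
  rw [div_le_iff₀' (by positivity)] at hlarge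
  calc t = 4 * t / 4 := by ring
    _ ≤ c ^ 2 * t * t / 4 := by gcongr
    _ = (c / 2 * t) ^ 2 := by ring
    _ ≤ f t ^ 2 := pow_le_pow_left₀ (by positivity) hhalf 2

theorem not_forall_mul_sq_le_hasDerivWithinAt_of_pos (hc : 0 < c)
    (hf : ∀ t ∈ Ici a, HasDerivWithinAt f (f' t) (Ici a) t) (hpos : ∀ t ∈ Ici a, 0 < f t) :
    ¬ ∀ t ∈ Ici a, c * f t ^ 2 ≤ f' t := by
  intro hriccati
  have hinv : ∀ t ∈ Ici a,
      HasDerivWithinAt (fun t ↦ -(f t)⁻¹) (f' t / f t ^ 2) (Ici a) t := fun t ht ↦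
    ((hf t ht).fun_inv (hpos t ht).ne').fun_neg.congr_deriv (by ring)
  have hrate : ∀ t ∈ Ici a, c ≤ f' t / f t ^ 2 := fun t ht ↦
    (le_div_iff₀ (pow_pos (hpos t ht) 2)).2 (hriccati t ht)
  have hfa : 0 < (f a)⁻¹ := inv_pos.2 (hpos a self_mem_Ici)
  let T := a + (f a)⁻¹ / c
  have haT : a ≤ T := le_add_of_nonneg_right (by positivity)
  have hdecay : c * (T - a) ≤ -(f T)⁻¹ - -(f a)⁻¹ :=
    mul_sub_le_sub_of_le_hasDerivWithinAt (convex_Ici a) hinv hrate self_mem_Ici haT haT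
  have hT : c * (T - a) = (f a)⁻¹ := by
    rw [add_sub_cancel_left, mul_div_cancel₀ _ hc.ne']
  linarith [inv_pos.2 (hpos T haT)]

theorem mul_sq_le_hasDerivWithinAt_of_mul_pow_three_le (hk : 0 ≤ k)
    (hf : ∀ t ∈ Ici a, HasDerivWithinAt f (f' t) (Ici a) t)
    (hf' : ∀ t ∈ Ici a, HasDerivWithinAt f' (f'' t) (Ici a) t)
    (hf'_nonneg : ∀ t ∈ Ici a, 0 ≤ f' t) (hcube : ∀ t ∈ Ici a, 2 * k ^ 2 * f t ^ 3 ≤ f'' t)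
    (hinit : k * f a ^ 2 ≤ f' a) : ∀ t ∈ Ici a, k * f t ^ 2 ≤ f' t := by
  intro t ht
  have henergy_mono : MonotoneOn (fun t ↦ f' t ^ 2 - (k * f t ^ 2) ^ 2) (Ici a) := by
    refine monotoneOn_of_hasDerivWithinAt_self_nonneg
      (f' := fun t ↦ 2 * f' t * (f'' t - 2 * k ^ 2 * f t ^ 3)) (convex_Ici a)
      (fun t ht ↦ ?_) fun t ht ↦ ?_
    · refine (((hf' t ht).fun_pow 2).fun_sub
        ((((hf t ht).fun_pow 2).const_mul k).fun_pow 2)).congr_deriv ?_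
      push_cast
      ring
    · have := hf'_nonneg t ht
      exact mul_nonneg (by positivity) (sub_nonneg.2 (hcube t ht))
  have henergy_init : (k * f a ^ 2) ^ 2 ≤ f' a ^ 2 := pow_le_pow_left₀ (by positivity) hinit 2
  have henergy : (k * f t ^ 2) ^ 2 ≤ f' t ^ 2 := by
    linarith [henergy_mono self_mem_Ici ht ht]
  exact le_of_sq_le_sq henergy (hf'_nonneg t ht)

theorem not_forall_mul_pow_three_le_hasDerivWithinAt_of_pos (hc : 0 < c)
    (hf : ∀ t ∈ Ici a, HasDerivWithinAt f (f' t) (Ici a) t)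
    (hf' : ∀ t ∈ Ici a, HasDerivWithinAt f' (f'' t) (Ici a) t)
    (hpos : ∀ t ∈ Ici a, 0 < f t) (hf'a : 0 < f' a) :
    ¬ ∀ t ∈ Ici a, c * f t ^ 3 ≤ f'' t := by
  intro hcube
  have hfa : 0 < f a := hpos a self_mem_Ici
  have hf'_mono : MonotoneOn f' (Ici a) :=
    monotoneOn_of_hasDerivWithinAt_self_nonneg (convex_Ici a) hf' fun t ht ↦
      (mul_pos hc (pow_pos (hpos t ht) 3)).le.trans (hcube t ht)
  let k := min √(c / 2) (f' a / f a ^ 2)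
  have hk : 0 < k := lt_min (by positivity) (by positivity)
  have hkc : 2 * k ^ 2 ≤ c := by
    have : k ^ 2 ≤ c / 2 := (Real.le_sqrt hk.le (by positivity)).1 (min_le_left _ _)
    linarith
  have hinit : k * f a ^ 2 ≤ f' a := (le_div_iff₀ (by positivity)).1 (min_le_right _ _)
  exact not_forall_mul_sq_le_hasDerivWithinAt_of_pos hk hf hpos <|
    mul_sq_le_hasDerivWithinAt_of_mul_pow_three_le hk.le hf hf'
      (fun t ht ↦ hf'a.le.trans (hf'_mono self_mem_Ici ht ht))
      (fun t ht ↦ (mul_le_mul_of_nonneg_right hkc (pow_pos (hpos t ht) 3).le).trans (hcube t ht))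
      hinit

end DifferentialInequalities

theorem not_bddAbove_image_of_le_mul_sq {f : ℝ → ℝ} {a c : ℝ} (hc : 0 ≤ c)
    (hf : ∀ t ∈ Ici a, 0 ≤ f t) (hle : ∀ t ∈ Ici a, t ≤ c * f t ^ 2) :
    ¬ BddAbove (f '' Ici a) := by
  rintro ⟨M, hM⟩
  refine not_bddAbove_Ici a ⟨c * M ^ 2, fun t ht ↦ (hle t ht).trans ?_⟩
  exact mul_le_mul_of_nonneg_left
    (pow_le_pow_left₀ (hf t ht) (hM (mem_image_of_mem f ht)) 2) hc

theorem forall_gt_or_forall_lt_of_continuousOn_of_ne {X α : Type*} [TopologicalSpace X]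
    [LinearOrder α] [TopologicalSpace α] [OrderClosedTopology α] {S : Set X} {f : X → α} {c : α}
    (hS : IsPreconnected S) (hf : ContinuousOn f S) (hne : ∀ x ∈ S, f x ≠ c) :
    (∀ x ∈ S, c < f x) ∨ ∀ x ∈ S, f x < c := by
  by_contra! ⟨⟨x, hx, hfx⟩, y, hy, hfy⟩
  obtain ⟨z, hz, hfz⟩ := hS.intermediate_value hx hy hf ⟨hfx, hfy⟩
  exact hne z hz hfz

/-- `s` solves the equation PII⁻, `s'' = 2 s³ - t s`, on `D`, with first derivative `s'`.
Derivatives are taken within `D`, so they are one-sided at an endpoint of an interval. -/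
structure IsPainleveIINegOn (s s' : ℝ → ℝ) (D : Set ℝ) : Prop where
  hasDerivWithinAt : ∀ t ∈ D, HasDerivWithinAt s (s' t) D t
  hasDerivWithinAt_deriv : ∀ t ∈ D, HasDerivWithinAt s' (2 * s t ^ 3 - t * s t) D t

namespace IsPainleveIINegOn

variable {s s' : ℝ → ℝ} {D E : Set ℝ} {a : ℝ}

theorem mono (h : IsPainleveIINegOn s s' D) (hED : E ⊆ D) : IsPainleveIINegOn s s' E where
  hasDerivWithinAt t ht := (h.hasDerivWithinAt t (hED ht)).mono hED
  hasDerivWithinAt_deriv t ht := (h.hasDerivWithinAt_deriv t (hED ht)).mono hED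

theorem neg (h : IsPainleveIINegOn s s' D) : IsPainleveIINegOn (-s) (-s') D where
  hasDerivWithinAt t ht := (h.hasDerivWithinAt t ht).neg
  hasDerivWithinAt_deriv t ht := (h.hasDerivWithinAt_deriv t ht).neg.congr_deriv (by
    simp only [Pi.neg_apply]
    ring)

theorem continuousOn (h : IsPainleveIINegOn s s' D) : ContinuousOn s D :=
  fun t ht ↦ (h.hasDerivWithinAt t ht).continuousWithinAt

theorem monotoneOn_deriv (h : IsPainleveIINegOn s s' D) (hD : Convex ℝ D)
    (hs : ∀ t ∈ D, 0 ≤ s t) (hle : ∀ t ∈ D, t ≤ 2 * s t ^ 2) : MonotoneOn s' D := by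
  refine monotoneOn_of_hasDerivWithinAt_self_nonneg hD h.hasDerivWithinAt_deriv fun t ht ↦ ?_
  calc 0 ≤ s t * (2 * s t ^ 2 - t) := mul_nonneg (hs t ht) (sub_nonneg.2 (hle t ht))
    _ = 2 * s t ^ 3 - t * s t := by ring

theorem not_forall_le_two_mul_sq_of_pos (h : IsPainleveIINegOn s s' (Ici a))
    (hs : ∀ t ∈ Ici a, 0 < s t) : ¬ ∀ t ∈ Ici a, t ≤ 2 * s t ^ 2 := by
  intro hle
  have hs_nonneg : ∀ t ∈ Ici a, 0 ≤ s t := fun t ht ↦ (hs t ht).le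
  have hs'_mono : MonotoneOn s' (Ici a) := h.monotoneOn_deriv (convex_Ici a) hs_nonneg hle
  obtain ⟨b, hab, hs'b⟩ : ∃ b ∈ Ici a, 0 < s' b :=
    exists_hasDerivWithinAt_pos_of_not_bddAbove h.hasDerivWithinAt
      (not_bddAbove_image_of_le_mul_sq zero_le_two hs_nonneg hle)
  have hba : Ici b ⊆ Ici a := Ici_subset_Ici.2 hab
  have hlarge : ∀ᶠ t in atTop, t ≤ s t ^ 2 :=
    eventually_le_sq_of_le_hasDerivWithinAt hs'b (h.mono hba).hasDerivWithinAt
      fun t ht ↦ hs'_mono hab (hba ht) ht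
  obtain ⟨T, hT⟩ := (hlarge.and (eventually_ge_atTop b)).exists_forall_of_atTop
  have hbT : b ≤ T := (hT T le_rfl).2
  have hTa : Ici T ⊆ Ici a := (Ici_subset_Ici.2 hbT).trans hba
  have hs'T : 0 < s' T := hs'b.trans_le (hs'_mono hab (hba hbT) hbT)
  have hcube : ∀ t ∈ Ici T, 1 * s t ^ 3 ≤ 2 * s t ^ 3 - t * s t := fun t ht ↦ by
    linarith [mul_le_mul_of_nonneg_right (hT t ht).1 (hs_nonneg t (hTa ht))]
  exact not_forall_mul_pow_three_le_hasDerivWithinAt_of_pos one_pos (h.mono hTa).hasDerivWithinAt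
    (h.mono hTa).hasDerivWithinAt_deriv (fun t ht ↦ hs t (hTa ht)) hs'T hcube

end IsPainleveIINegOn

theorem painleveIIneg_no_global_convex_general {t₀ : ℝ} {s s' : ℝ → ℝ}
    (h : IsPainleveIINegOn s s' (Ici t₀)) : ¬ ∀ t ∈ Ici t₀, t ≤ 2 * s t ^ 2 := by
  intro hle
  let a := max t₀ 1
  have hsub : Ici a ⊆ Ici t₀ := Ici_subset_Ici.2 (le_max_left _ _)
  have hsol : IsPainleveIINegOn s s' (Ici a) := h.mono hsub
  have hle_a : ∀ t ∈ Ici a, t ≤ 2 * s t ^ 2 := fun t ht ↦ hle t (hsub ht)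
  have hne : ∀ t ∈ Ici a, s t ≠ 0 := by
    intro t ht hst
    have ht_pos : 0 < t := one_pos.trans_le ((le_max_right t₀ 1).trans ht)
    have ht_nonpos : t ≤ 2 * s t ^ 2 := hle_a t ht
    rw [hst] at ht_nonpos
    linarith
  rcases forall_gt_or_forall_lt_of_continuousOn_of_ne isPreconnected_Ici
    hsol.continuousOn hne with hpos | hneg
  · exact hsol.not_forall_le_two_mul_sq_of_pos hpos hle_a
  · exact hsol.neg.not_forall_le_two_mul_sq_of_pos (fun t ht ↦ neg_pos.2 (hneg t ht))
      fun t ht ↦ by simpa only [Pi.neg_apply, neg_sq] using hle_a t ht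

/-- A solution of `s'' = 2s³ − ts` on `[t₀,∞)` cannot satisfy both `2s² − t > 0` and
`4ss' − 1 > 0` for all `t ≥ t₀`: the concavity would force finite-time blow-up. -/
theorem painleveIIneg_no_global_convex (t₀ : ℝ) (ht₀ : 0 < t₀) (s s' s'' : ℝ → ℝ)
    (hderiv1 : ∀ t ∈ Ici t₀, HasDerivWithinAt s (s' t) (Ici t₀) t)
    (hderiv2 : ∀ t ∈ Ici t₀, HasDerivWithinAt s' (s'' t) (Ici t₀) t)
    (hcont : ContinuousOn s'' (Ici t₀))
    (heq : ∀ t ∈ Ici t₀, s'' t = 2 * s t ^ 3 - t * s t) :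
    ¬ ∀ t ∈ Ici t₀, 0 < 2 * s t ^ 2 - t ∧ 0 < 4 * s t * s' t - 1 := fun h ↦
  painleveIIneg_no_global_convex_general ⟨hderiv1, fun t ht ↦ heq t ht ▸ hderiv2 t ht⟩
    fun t ht ↦ (sub_pos.1 (h t ht).1).le
end

section
/- Let σ > 0, let T > 0, and let s : ℝ → ℝ be twice continuously differentiable on [0,T) with s(0) = 0, s'(0) = σ, and s''(t) = 2 s(t)³ − t s(t) for all t ∈ [0,T). If s is strictly increasing on [0,T), then for every t with 0 < t < T and √σ · t < π/2 one has s(t) < √σ · tan(√σ · t). (In particular a strictly increasing solution does not blow up before time π/√(4σ).) -/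
open Set Real

/-!
Put `w = s' - (σ + s²)`, so that `w 0 = 0` and `w' = s'' - 2 s s' = -s (t + 2 σ + 2 w)`. Since
`s > 0` for `t > 0`, the function `w` decreases wherever it is nonnegative, hence stays negative.
The resulting Riccati inequality `s' < σ + s²` says that `arctan (s / √σ) - √σ t`, which vanishes
at `0`, has negative derivative.
-/

theorem nonneg_of_hasDerivWithinAt_of_isMaxOn_Icc_right {f : ℝ → ℝ} {f' a b : ℝ} (hab : a < b)
    (hmax : IsMaxOn f (Icc a b) b) (hf : HasDerivWithinAt f f' (Icc a b) b) : 0 ≤ f' := by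
  have htangent : a - b ∈ posTangentConeAt (Icc a b) b :=
    sub_mem_posTangentConeAt_of_segment_subset (by rw [segment_symm, segment_eq_Icc hab.le])
  have hnonpos : (a - b) * f' ≤ 0 := by
    simpa using hmax.localize.hasFDerivWithinAt_nonpos hf.hasFDerivWithinAt htangent
  exact nonneg_of_mul_nonpos_right hnonpos (sub_neg.2 hab)

theorem neg_of_hasDerivAt_neg_of_nonneg {f f' : ℝ → ℝ} {a b : ℝ}
    (hf : ContinuousOn f (Ico a b)) (hf' : ∀ x ∈ Ioo a b, HasDerivAt f (f' x) x)
    (ha : f a ≤ 0) (hneg : ∀ x ∈ Ioo a b, 0 ≤ f x → f' x < 0) {x : ℝ} (hx : x ∈ Ioo a b) :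
    f x < 0 := by
  by_contra! hfx
  have not_isMaxOn : ∀ c ∈ Ioc a x, 0 ≤ f c → ¬ IsMaxOn f (Icc a c) c := by
    intro c hc hfc hmax
    have hc_mem : c ∈ Ioo a b := ⟨hc.1, hc.2.trans_lt hx.2⟩
    exact (hneg c hc_mem hfc).not_ge <|
      nonneg_of_hasDerivWithinAt_of_isMaxOn_Icc_right hc.1 hmax (hf' c hc_mem).hasDerivWithinAt
  obtain ⟨c, hc, hmax⟩ := isCompact_Icc.exists_isMaxOn (nonempty_Icc.2 hx.1.le)
    (hf.mono (Icc_subset_Ico_right hx.2))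
  have hxc : f x ≤ f c := hmax (right_mem_Icc.2 hx.1.le)
  rcases hc.1.eq_or_lt with rfl | hac
  · exact not_isMaxOn x (right_mem_Ioc.2 hx.1) hfx fun y hy => (hmax hy).trans (ha.trans hfx)
  · exact not_isMaxOn c ⟨hac, hc.2⟩ (hfx.trans hxc) (hmax.on_subset (Icc_subset_Icc_right hc.2))

theorem deriv_lt_add_sq_of_deriv2_lt {s s' s'' : ℝ → ℝ} {a b σ : ℝ}
    (hs : ContinuousOn s (Ico a b)) (hs' : ContinuousOn s' (Ico a b))
    (hderiv : ∀ x ∈ Ioo a b, HasDerivAt s (s' x) x)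
    (hderiv2 : ∀ x ∈ Ioo a b, HasDerivAt s' (s'' x) x)
    (hnonneg : ∀ x ∈ Ioo a b, 0 ≤ s x) (ha : s' a ≤ σ + s a ^ 2)
    (hlt : ∀ x ∈ Ioo a b, s'' x < 2 * s x * (σ + s x ^ 2)) {x : ℝ} (hx : x ∈ Ioo a b) :
    s' x < σ + s x ^ 2 := by
  refine sub_neg.1 <| neg_of_hasDerivAt_neg_of_nonneg (f := fun y => s' y - (σ + s y ^ 2))
    (f' := fun y => s'' y - 2 * s y * s' y) (by fun_prop) (fun y hy => ?_) (sub_nonpos.2 ha)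
    (fun y hy hge => ?_) hx
  · exact ((hderiv2 y hy).sub (((hderiv y hy).pow 2).const_add σ)).congr_deriv (by simp)
  · have hmul : 2 * s y * (σ + s y ^ 2) ≤ 2 * s y * s' y :=
      mul_le_mul_of_nonneg_left (sub_nonneg.1 hge) (mul_nonneg zero_le_two (hnonneg y hy))
    linarith [hlt y hy]

theorem strictAntiOn_arctan_div_sub_mul {s s' : ℝ → ℝ} {D : Set ℝ} {r : ℝ} (hD : Convex ℝ D)
    (hr : 0 < r) (hs : ContinuousOn s D) (hderiv : ∀ x ∈ interior D, HasDerivAt s (s' x) x)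
    (hlt : ∀ x ∈ interior D, s' x < r ^ 2 + s x ^ 2) :
    StrictAntiOn (fun x => arctan (s x / r) - r * x) D := by
  refine strictAntiOn_of_hasDerivWithinAt_neg hD
    (f' := fun x => r * (s' x / (r ^ 2 + s x ^ 2)) - r) (by fun_prop) (fun x hx => ?_)
    (fun x hx => ?_)
  · have hderiv_arctan := ((hderiv x hx).div_const r).arctan.sub ((hasDerivAt_id x).const_mul r)
    refine (hderiv_arctan.congr_deriv ?_).hasDerivWithinAt
    field_simp
  · have hquot : s' x / (r ^ 2 + s x ^ 2) < 1 := (div_lt_one (by positivity)).2 (hlt x hx)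
    exact sub_neg.2 (mul_lt_of_lt_one_right hr hquot)

theorem lt_mul_tan_of_deriv_lt_sq_add_sq {s s' : ℝ → ℝ} {T r t : ℝ} (hr : 0 < r)
    (hs : ContinuousOn s (Ico 0 T)) (hderiv : ∀ x ∈ Ioo 0 T, HasDerivAt s (s' x) x)
    (hs0 : s 0 ≤ 0) (hlt : ∀ x ∈ Ioo 0 T, s' x < r ^ 2 + s x ^ 2)
    (ht : t ∈ Ioo 0 T) (htpi : r * t < π / 2) :
    s t < r * tan (r * t) := by
  have hanti := strictAntiOn_arctan_div_sub_mul (convex_Ico 0 T) hr hs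
    (by rwa [interior_Ico]) (by rwa [interior_Ico])
  have harctan : arctan (s t / r) < r * t := by
    have hlt_zero : arctan (s t / r) - r * t < arctan (s 0 / r) - r * 0 :=
      hanti (left_mem_Ico.2 (ht.1.trans ht.2)) (Ioo_subset_Ico_self ht) ht.1
    have harctan_zero : arctan (s 0 / r) ≤ 0 :=
      arctan_le_zero.2 (div_nonpos_of_nonpos_of_nonneg hs0 hr.le)
    linarith
  have htan : tan (arctan (s t / r)) < tan (r * t) :=
    tan_lt_tan_of_lt_of_lt_pi_div_two (neg_pi_div_two_lt_arctan _) htpi harctan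
  rwa [tan_arctan, div_lt_iff₀' hr] at htan

theorem painleveIIneg_tan_bound_general {s s' : ℝ → ℝ} {σ T t : ℝ} (hσ : 0 < σ)
    (hderiv : ∀ x ∈ Ico 0 T, HasDerivWithinAt s (s' x) (Ico 0 T) x)
    (hderiv2 : ∀ x ∈ Ico 0 T, HasDerivWithinAt s' (2 * s x ^ 3 - x * s x) (Ico 0 T) x)
    (hs0 : s 0 = 0) (hs'0 : s' 0 = σ) (hpos : ∀ x ∈ Ioo 0 T, 0 < s x)
    (ht : t ∈ Ioo 0 T) (htpi : √σ * t < π / 2) :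
    s t < √σ * tan (√σ * t) := by
  have hs : ContinuousOn s (Ico 0 T) := HasDerivWithinAt.continuousOn hderiv
  have hs' : ContinuousOn s' (Ico 0 T) := HasDerivWithinAt.continuousOn hderiv2
  have hderivAt : ∀ x ∈ Ioo 0 T, HasDerivAt s (s' x) x := fun x hx =>
    (hderiv x (Ioo_subset_Ico_self hx)).hasDerivAt (Ico_mem_nhds hx.1 hx.2)
  have hderivAt2 : ∀ x ∈ Ioo 0 T, HasDerivAt s' (2 * s x ^ 3 - x * s x) x := fun x hx =>
    (hderiv2 x (Ioo_subset_Ico_self hx)).hasDerivAt (Ico_mem_nhds hx.1 hx.2)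
  have hderiv2_lt : ∀ x ∈ Ioo 0 T, 2 * s x ^ 3 - x * s x < 2 * s x * (σ + s x ^ 2) := by
    intro x hx
    linarith [mul_pos hx.1 (hpos x hx), mul_pos hσ (hpos x hx)]
  have hriccati : ∀ x ∈ Ioo 0 T, s' x < √σ ^ 2 + s x ^ 2 := fun x hx => by
    rw [sq_sqrt hσ.le]
    exact deriv_lt_add_sq_of_deriv2_lt hs hs' hderivAt hderivAt2 (fun y hy => (hpos y hy).le)
      (by simp [hs0, hs'0]) hderiv2_lt hx
  exact lt_mul_tan_of_deriv_lt_sq_add_sq (sqrt_pos.2 hσ) hs hderivAt hs0.le hriccati ht htpi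

/-- A strictly increasing solution of `s'' = 2s³ − ts` with `s(0) = 0`, `s'(0) = σ > 0`
satisfies `s(t) < √σ tan(√σ t)` for `0 < t < T` with `√σ t < π/2`. -/
theorem painleveIIneg_tan_bound (σ T : ℝ) (hσ : 0 < σ) (hT : 0 < T) (s s' s'' : ℝ → ℝ)
    (hderiv1 : ∀ t ∈ Ico (0:ℝ) T, HasDerivWithinAt s (s' t) (Ico 0 T) t)
    (hderiv2 : ∀ t ∈ Ico (0:ℝ) T, HasDerivWithinAt s' (s'' t) (Ico 0 T) t)
    (hcont : ContinuousOn s'' (Ico 0 T))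
    (hs0 : s 0 = 0) (hs'0 : s' 0 = σ)
    (heq : ∀ t ∈ Ico (0:ℝ) T, s'' t = 2 * s t ^ 3 - t * s t)
    (hmono : StrictMonoOn s (Ico 0 T)) :
    ∀ t, 0 < t → t < T → Real.sqrt σ * t < π / 2 →
      s t < Real.sqrt σ * Real.tan (Real.sqrt σ * t) := by
  have hpos : ∀ x ∈ Ioo 0 T, 0 < s x := fun x hx =>
    hs0 ▸ hmono (left_mem_Ico.2 hT) (Ioo_subset_Ico_self hx) hx.1
  exact fun t ht htT => painleveIIneg_tan_bound_general hσ hderiv1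
    (fun x hx => heq x hx ▸ hderiv2 x hx) hs0 hs'0 hpos ⟨ht, htT⟩
end

section
/- Let s : ℝ → ℝ be twice continuously differentiable on [0,∞) and satisfy s''(t) = 2 s(t)³ − t s(t) for all t ≥ 0, and let 0 ≤ a < b be consecutive zeros of s (that is, s(a) = 0, s(b) = 0, and s(t) ≠ 0 for all t ∈ (a,b)). Let g : ℝ → ℝ be twice continuously differentiable on [0,∞) and satisfy the Airy equation g''(t) + t g(t) = 0 for all t ≥ 0. Then g vanishes at some point of the open interval (a,b). -/
open Set

/-!
The Painlevé equation `s'' = 2 s ^ 3 - t s` reads `s'' + (t - 2 s ^ 2) s = 0`, so `s` solves a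
linear equation whose coefficient lies strictly below the Airy coefficient `t` wherever `s ≠ 0`, and
Sturm's comparison theorem applies. To prove the latter for `u'' + p u = 0` and `v'' + q v = 0` with
`p ≤ q`, suppose that `v` has no zero between the consecutive zeros `a < b` of `u`. Both functions
then have constant sign, so `|u|` and `|v|` solve the same equations on `[a, b]`. Their Wronskian
`W = |u|' |v| - |u| |v|'` is nondecreasing because `W' = (q - p) |u| |v|`, whereas `W a ≥ 0 ≥ W b`
since `|u|` is minimal at both endpoints. Hence `W' = 0`, which is impossible where `p < q`.
-/

theorem sub_mul_nonneg_of_isLocalMinOn {f : ℝ → ℝ} {d x y : ℝ} {I : Set ℝ}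
    (hmin : IsLocalMinOn f I x) (hf : HasDerivWithinAt f d I x) (hI : segment ℝ x y ⊆ I) :
    0 ≤ (y - x) * d := by
  simpa using hmin.hasFDerivWithinAt_nonneg hf.hasFDerivWithinAt
    (sub_mem_posTangentConeAt_of_segment_subset hI)

/-- `u` solves the linear second-order equation `u'' + q u = 0` on `I` and has first derivative
`u'` there. Derivatives are taken within `I`, hence are one-sided at the endpoints of a real
interval. -/
structure IsSturmSolutionOn {𝕜 : Type*} [NontriviallyNormedField 𝕜] (q u u' : 𝕜 → 𝕜)
    (I : Set 𝕜) : Prop where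
  hasDerivWithinAt : ∀ t ∈ I, HasDerivWithinAt u (u' t) I t
  hasDerivWithinAt_deriv : ∀ t ∈ I, HasDerivWithinAt u' (-(q t * u t)) I t

/-- The Wronskian of `u` and `v`, with the sign convention `u' v - u v'`; the derivatives `u'` and
`v'` are passed as separate functions. -/
def wronskian {𝕜 : Type*} [Ring 𝕜] (u u' v v' : 𝕜 → 𝕜) (t : 𝕜) : 𝕜 :=
  u' t * v t - u t * v' t

namespace IsSturmSolutionOn

section NormedField

variable {𝕜 : Type*} [NontriviallyNormedField 𝕜] {p q u u' v v' : 𝕜 → 𝕜} {I J : Set 𝕜}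

theorem continuousOn (hu : IsSturmSolutionOn q u u' I) : ContinuousOn u I :=
  fun t ht => (hu.hasDerivWithinAt t ht).continuousWithinAt

theorem mono (hu : IsSturmSolutionOn q u u' I) (hJI : J ⊆ I) : IsSturmSolutionOn q u u' J where
  hasDerivWithinAt t ht := (hu.hasDerivWithinAt t (hJI ht)).mono hJI
  hasDerivWithinAt_deriv t ht := (hu.hasDerivWithinAt_deriv t (hJI ht)).mono hJI

theorem congr (hu : IsSturmSolutionOn q u u' I) (hvu : EqOn v u I) :
    IsSturmSolutionOn q v u' I where
  hasDerivWithinAt t ht := (hu.hasDerivWithinAt t ht).congr hvu (hvu ht)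
  hasDerivWithinAt_deriv t ht := by simpa only [hvu ht] using hu.hasDerivWithinAt_deriv t ht

theorem neg (hu : IsSturmSolutionOn q u u' I) : IsSturmSolutionOn q (-u) (-u') I where
  hasDerivWithinAt t ht := (hu.hasDerivWithinAt t ht).neg
  hasDerivWithinAt_deriv t ht := by
    simpa only [Pi.neg_apply, mul_neg] using (hu.hasDerivWithinAt_deriv t ht).neg

theorem hasDerivWithinAt_wronskian (hu : IsSturmSolutionOn p u u' I)
    (hv : IsSturmSolutionOn q v v' I) {t : 𝕜} (ht : t ∈ I) :
    HasDerivWithinAt (wronskian u u' v v') ((q t - p t) * (u t * v t)) I t := by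
  refine (((hu.hasDerivWithinAt_deriv t ht).mul (hv.hasDerivWithinAt t ht)).sub
    ((hu.hasDerivWithinAt t ht).mul (hv.hasDerivWithinAt_deriv t ht))).congr_deriv ?_
  ring

end NormedField

variable {p q u u' v v' : ℝ → ℝ} {a b : ℝ} {I J : Set ℝ}

theorem exists_abs (hu : IsSturmSolutionOn q u u' I) (hJ : IsPreconnected J) (hJI : J ⊆ I)
    (hIJ : I ⊆ closure J) (hne : ∀ t ∈ J, u t ≠ 0) : ∃ w', IsSturmSolutionOn q |u| w' I := by
  have habs : ContinuousOn |u| I := hu.continuousOn.abs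
  have hsign : EqOn |u| u J ∨ EqOn |u| (-u) J :=
    hJ.eq_or_eq_neg_of_sq_eq (habs.mono hJI) (hu.continuousOn.mono hJI)
      (fun t _ => sq_abs (u t)) (hne _)
  rcases hsign with hpos | hneg
  · exact ⟨u', hu.congr (hpos.of_subset_closure habs hu.continuousOn hJI hIJ)⟩
  · exact ⟨-u', hu.neg.congr (hneg.of_subset_closure habs hu.continuousOn.neg hJI hIJ)⟩

theorem monotoneOn_wronskian (hu : IsSturmSolutionOn p u u' I) (hv : IsSturmSolutionOn q v v' I)
    (hI : Convex ℝ I) (hpq : ∀ t ∈ interior I, p t ≤ q t)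
    (huv : ∀ t ∈ interior I, 0 ≤ u t * v t) : MonotoneOn (wronskian u u' v v') I :=
  monotoneOn_of_hasDerivWithinAt_nonneg hI
    (fun _ ht => (hu.hasDerivWithinAt_wronskian hv ht).continuousWithinAt)
    (fun _ ht => (hu.hasDerivWithinAt_wronskian hv (interior_subset ht)).mono interior_subset)
    (fun t ht => mul_nonneg (sub_nonneg.2 (hpq t ht)) (huv t ht))

theorem sub_mul_wronskian_nonneg (hu : IsSturmSolutionOn p u u' I) {x y : ℝ}
    (hI : segment ℝ x y ⊆ I) (hu_nonneg : ∀ t ∈ I, 0 ≤ u t) (hux : u x = 0) (hvx : 0 ≤ v x) :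
    0 ≤ (y - x) * wronskian u u' v v' x := by
  have hmin : IsMinOn u I x := fun t ht => hux.trans_le (hu_nonneg t ht)
  have hslope : 0 ≤ (y - x) * u' x := sub_mul_nonneg_of_isLocalMinOn hmin.localize
    (hu.hasDerivWithinAt x (hI (left_mem_segment ℝ x y))) hI
  calc 0 ≤ (y - x) * u' x * v x := mul_nonneg hslope hvx
    _ = (y - x) * wronskian u u' v v' x := by rw [wronskian, hux]; ring

theorem wronskian_eqOn_zero (hu : IsSturmSolutionOn p u u' (Icc a b))
    (hv : IsSturmSolutionOn q v v' (Icc a b)) (hab : a < b) (hpq : ∀ t ∈ Ioo a b, p t ≤ q t)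
    (hu_nonneg : ∀ t ∈ Icc a b, 0 ≤ u t) (hv_nonneg : ∀ t ∈ Icc a b, 0 ≤ v t)
    (hua : u a = 0) (hub : u b = 0) : EqOn (wronskian u u' v v') 0 (Icc a b) := by
  have ha : a ∈ Icc a b := left_mem_Icc.2 hab.le
  have hb : b ∈ Icc a b := right_mem_Icc.2 hab.le
  have hmono : MonotoneOn (wronskian u u' v v') (Icc a b) := by
    refine hu.monotoneOn_wronskian hv (convex_Icc a b) (by rwa [interior_Icc]) fun t ht => ?_
    exact mul_nonneg (hu_nonneg t (interior_subset ht)) (hv_nonneg t (interior_subset ht))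
  have hWa : 0 ≤ wronskian u u' v v' a :=
    nonneg_of_mul_nonneg_right (hu.sub_mul_wronskian_nonneg (segment_eq_Icc hab.le).subset
      hu_nonneg hua (hv_nonneg a ha)) (sub_pos.2 hab)
  have hWb : wronskian u u' v v' b ≤ 0 := by
    have hseg : segment ℝ b a ⊆ Icc a b := by rw [segment_symm, segment_eq_Icc hab.le]
    exact nonpos_of_mul_nonneg_right
      (hu.sub_mul_wronskian_nonneg hseg hu_nonneg hub (hv_nonneg b hb)) (sub_neg.2 hab)
  exact fun t ht => le_antisymm ((hmono ht hb ht.2).trans hWb) (hWa.trans (hmono ha ht ht.1))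

theorem exists_zero_of_coeff_le (hu : IsSturmSolutionOn p u u' (Icc a b))
    (hv : IsSturmSolutionOn q v v' (Icc a b)) (hua : u a = 0) (hub : u b = 0)
    (hne : ∀ t ∈ Ioo a b, u t ≠ 0) (hpq : ∀ t ∈ Ioo a b, p t ≤ q t)
    (hlt : ∃ t ∈ Ioo a b, p t < q t) : ∃ x ∈ Ioo a b, v x = 0 := by
  obtain ⟨t, ht, hpqt⟩ := hlt
  have hab : a < b := ht.1.trans ht.2
  by_contra! hvne
  have hdense : Icc a b ⊆ closure (Ioo a b) := (closure_Ioo hab.ne).superset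
  obtain ⟨w', hw⟩ := hu.exists_abs isPreconnected_Ioo Ioo_subset_Icc_self hdense hne
  obtain ⟨z', hz⟩ := hv.exists_abs isPreconnected_Ioo Ioo_subset_Icc_self hdense hvne
  have hW : EqOn (wronskian |u| w' |v| z') 0 (Icc a b) :=
    hw.wronskian_eqOn_zero hz hab hpq (fun x _ => abs_nonneg (u x)) (fun x _ => abs_nonneg (v x))
      (abs_eq_zero.2 hua) (abs_eq_zero.2 hub)
  have htI : t ∈ Icc a b := Ioo_subset_Icc_self ht
  have hderiv : (q t - p t) * (|u t| * |v t|) = 0 :=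
    (uniqueDiffOn_Icc hab t htI).eq_deriv _ (hw.hasDerivWithinAt_wronskian hz htI)
      ((hasDerivWithinAt_const t (Icc a b) (0 : ℝ)).congr hW (hW htI))
  have hpos : 0 < (q t - p t) * (|u t| * |v t|) :=
    mul_pos (sub_pos.2 hpqt) (mul_pos (abs_pos.2 (hne t ht)) (abs_pos.2 (hvne t ht)))
  exact hpos.ne' hderiv

end IsSturmSolutionOn

/-- Sturm comparison: between consecutive zeros `a < b` in `[0,∞)` of a solution of
`s'' = 2s³ − ts`, every Airy function (solution of `g'' + tg = 0` on `[0,∞)`) vanishes. -/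
theorem airy_vanishes_between_zeros (s s' s'' g g' g'' : ℝ → ℝ)
    (hsderiv1 : ∀ t ∈ Ici (0:ℝ), HasDerivWithinAt s (s' t) (Ici 0) t)
    (hsderiv2 : ∀ t ∈ Ici (0:ℝ), HasDerivWithinAt s' (s'' t) (Ici 0) t)
    (hscont : ContinuousOn s'' (Ici 0))
    (hseq : ∀ t ∈ Ici (0:ℝ), s'' t = 2 * s t ^ 3 - t * s t)
    (hgderiv1 : ∀ t ∈ Ici (0:ℝ), HasDerivWithinAt g (g' t) (Ici 0) t)
    (hgderiv2 : ∀ t ∈ Ici (0:ℝ), HasDerivWithinAt g' (g'' t) (Ici 0) t)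
    (hgcont : ContinuousOn g'' (Ici 0))
    (hgeq : ∀ t ∈ Ici (0:ℝ), g'' t + t * g t = 0)
    (a b : ℝ) (ha : 0 ≤ a) (hab : a < b)
    (hsa : s a = 0) (hsb : s b = 0) (hne : ∀ t ∈ Ioo a b, s t ≠ 0) :
    ∃ x ∈ Ioo a b, g x = 0 := by
  have hIcc : Icc a b ⊆ Ici 0 := fun t ht => ha.trans ht.1
  have hs : IsSturmSolutionOn (fun t => t - 2 * s t ^ 2) s s' (Ici 0) :=
    ⟨hsderiv1, fun t ht => (hsderiv2 t ht).congr_deriv (by rw [hseq t ht]; ring)⟩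
  have hg : IsSturmSolutionOn id g g' (Ici 0) :=
    ⟨hgderiv1, fun t ht => (hgderiv2 t ht).congr_deriv (eq_neg_of_add_eq_zero_left (hgeq t ht))⟩
  have hcoeff : ∀ t ∈ Ioo a b, t - 2 * s t ^ 2 < t := fun t ht =>
    sub_lt_self t (mul_pos two_pos (sq_pos_of_ne_zero (hne t ht)))
  obtain ⟨t, ht⟩ := nonempty_Ioo.2 hab
  exact (hs.mono hIcc).exists_zero_of_coeff_le (hg.mono hIcc) hsa hsb hne
    (fun t ht => (hcoeff t ht).le) ⟨t, ht, hcoeff t ht⟩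
end
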